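/- arXiv:2310.20449 — 3 statements merged into one kernel-verified Lean document; each statement's English description precedes it below -/
import Mathlib

section
/- The polynomial F has integer coefficients, i.e., F ∈ ℤ[x]. -/
open scoped BigOperators Classical

noncomputable section

/-!
If `p = c ∏ (x - r_i)` has degree `d`, the resultant in `y` of `p(y)` and `p(y + x)` is
`c^{2d} ∏_{i,j} (x - (r_i - r_j))`. As the determinant of a Sylvester matrix, it has coefficients in
any ring containing the coefficients of `p`. Finally `2d ≤ d² + d`, and `c` is itself a coefficient
of `p`.
-/

section

open Polynomial

variable {R S ι : Type*} [CommRing R] [CommRing S] [Fintype ι]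

/-- The resultant in `y` of `p(y)` and `p(y + x)`, as a polynomial in `x`: the elimination of `y`
which produces the differences of the roots of `p`. Both polynomials are taken with formal degree
`d`, rather than `p.natDegree`, so that the construction commutes with every ring homomorphism. -/
def shiftResultant (p : R[X]) (d : ℕ) : R[X] :=
  resultant (p.map C) (taylor X (p.map C)) d d

lemma shiftResultant_map (φ : R →+* S) (p : R[X]) (d : ℕ) :
    shiftResultant (p.map φ) d = (shiftResultant p d).map φ := by
  have hcomm : (C : S →+* S[X]).comp φ = (mapRingHom φ).comp C := by
    ext; simp
  have hmap : (p.map φ).map C = (p.map C).map (mapRingHom φ) := by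
    rw [map_map, map_map, hcomm]
  have htaylor : taylor X ((p.map φ).map C) = (taylor X (p.map C)).map (mapRingHom φ) := by
    rw [hmap, map_taylor, coe_mapRingHom, map_X]
  rw [shiftResultant, htaylor, hmap, resultant_map_map, coe_mapRingHom, shiftResultant]

lemma resultant_prod_X_sub_C_left (r : ι → R) (g : R[X]) (n : ℕ) (hg : g.natDegree ≤ n) :
    resultant (∏ i, (X - C (r i))) g (Fintype.card ι) n = ∏ i, g.eval (r i) := by
  nontriviality R
  have h := resultant_prod_left Finset.univ (fun i ↦ X - C (r i)) g n (by simp) hg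
  have hlinear (i : ι) : resultant (X - C (r i)) g 1 n = g.eval (r i) := by
    have hpow := resultant_X_sub_C_pow_left (r i) g 1 n hg
    rwa [pow_one, pow_one] at hpow
  simpa only [natDegree_finsetProd_X_sub_C_eq_card, natDegree_X_sub_C, hlinear,
    Finset.card_univ] using h

lemma natDegree_C_mul_prod_X_sub_C_le (c : R) (r : ι → R) :
    (C c * ∏ i, (X - C (r i))).natDegree ≤ Fintype.card ι := by
  nontriviality R
  refine (natDegree_C_mul_le c _).trans_eq ?_
  rw [natDegree_finsetProd_X_sub_C_eq_card, Finset.card_univ]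

lemma coeff_card_C_mul_prod_X_sub_C (c : R) (r : ι → R) :
    (C c * ∏ i, (X - C (r i))).coeff (Fintype.card ι) = c := by
  nontriviality R
  have hmonic : (∏ i, (X - C (r i))).Monic := monic_prod_X_sub_C r Finset.univ
  have hlead := hmonic.coeff_natDegree
  rw [natDegree_finsetProd_X_sub_C_eq_card, Finset.card_univ] at hlead
  rw [coeff_C_mul, hlead, mul_one]

lemma shiftResultant_C_mul_prod_X_sub_C (c : R) (r : ι → R) :
    shiftResultant (C c * ∏ i, (X - C (r i))) (Fintype.card ι) =
      C (c ^ (2 * Fintype.card ι)) * ∏ ij : ι × ι, (X - C (r ij.1 - r ij.2)) := by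
  let q : R[X][X] := C (C c) * ∏ i, (X - C (C (r i)))
  have hq : (C c * ∏ i, (X - C (r i))).map C = q := by
    simp [q, Polynomial.map_prod]
  have hdeg : (taylor X q).natDegree ≤ Fintype.card ι :=
    (natDegree_taylor q X).trans_le (natDegree_C_mul_prod_X_sub_C_le (C c) fun i ↦ C (r i))
  have heval (j : ι) :
      (taylor X q).eval (C (r j)) = C c * ∏ i, (X - C (r i - r j)) := by
    rw [taylor_eval, eval_mul, eval_C, eval_prod]
    congr! 2 with i
    rw [eval_sub, eval_X, eval_C, C_sub]
    ring
  calc shiftResultant (C c * ∏ i, (X - C (r i))) (Fintype.card ι)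
      = resultant q (taylor X q) (Fintype.card ι) (Fintype.card ι) := by rw [shiftResultant, hq]
    _ = C c ^ Fintype.card ι * ∏ j, (taylor X q).eval (C (r j)) := by
      rw [resultant_C_mul_left, resultant_prod_X_sub_C_left _ _ _ hdeg]
    _ = C (c ^ (2 * Fintype.card ι)) * ∏ j, ∏ i, (X - C (r i - r j)) := by
      simp only [heval, Finset.prod_mul_distrib, Finset.prod_const, Finset.card_univ, C_pow]
      ring
    _ = C (c ^ (2 * Fintype.card ι)) * ∏ ij : ι × ι, (X - C (r ij.1 - r ij.2)) := by
      rw [Fintype.prod_prod_type_right]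

lemma exists_int_map_eq_map (φ : R →+* S) (p : R[X]) (hp : ∀ n, ∃ m : ℤ, p.coeff n = m) :
    ∃ q : ℤ[X], q.map (Int.castRingHom S) = p.map φ := by
  obtain ⟨q, rfl⟩ : ∃ q : ℤ[X], q.map (Int.castRingHom R) = p :=
    (mem_lifts p).1 <| (lifts_iff_coeff_lifts p).2 fun n ↦ (hp n).imp fun _ h ↦ h.symm
  exact ⟨q, by rw [map_map, RingHom.eq_intCast' (φ.comp _)]⟩

theorem stmt6_general (φ : R →+* S) (p : R[X]) (c : S) (r : ι → S)
    (hroots : p.map φ = C c * ∏ i, (X - C (r i))) (n : ℕ) (hn : 2 * Fintype.card ι ≤ n) :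
    ∃ G : R[X], G.map φ = C (c ^ n) * ∏ ij : ι × ι, (X - C (r ij.1 - r ij.2)) := by
  have hc : φ (p.coeff (Fintype.card ι)) = c := by
    rw [← coeff_map, hroots, coeff_card_C_mul_prod_X_sub_C]
  obtain ⟨k, rfl⟩ := Nat.exists_eq_add_of_le' hn
  refine ⟨C (p.coeff (Fintype.card ι) ^ k) * shiftResultant p (Fintype.card ι), ?_⟩
  rw [Polynomial.map_mul, map_C, map_pow, hc, ← shiftResultant_map, hroots,
    shiftResultant_C_mul_prod_X_sub_C, pow_add, C_mul, mul_assoc]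

end

/-- **Lemma (i): `F ∈ ℤ[x]`.**  The polynomial `F(x) = c^{d²+d} ∏_{i,j} (x-(r_i-r_j))`
built from the differences of the roots of `f̃ = t·f` has integer coefficients. -/
theorem stmt6 (f : Polynomial ℚ) (d : ℕ) (hdeg : f.natDegree = d) (hd1 : 1 ≤ d)
    (hint : ∀ n : ℤ, ∃ m : ℤ, f.eval (n : ℚ) = (m : ℚ))
    (hlead : 0 < f.leadingCoeff)
    (hirr : Irreducible f)
    -- `t` is the minimal positive integer with `t·f ∈ ℤ[x]`
    (t : ℕ) (ht : 0 < t)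
    (htf : ∀ n : ℕ, ∃ m : ℤ, (t : ℚ) * f.coeff n = (m : ℚ))
    (htmin : ∀ t' : ℕ, 0 < t' → (∀ n : ℕ, ∃ m : ℤ, (t' : ℚ) * f.coeff n = (m : ℚ)) → t ≤ t')
    -- `c` is the leading coefficient of `f̃ = t·f` and `r 0, …, r (d-1)` its complex roots
    (c : ℂ) (hc : c = (t : ℂ) * (f.map (algebraMap ℚ ℂ)).leadingCoeff)
    (r : Fin d → ℂ)
    (hroots : (Polynomial.C (t : ℚ) * f).map (algebraMap ℚ ℂ)
      = Polynomial.C c * ∏ i : Fin d, (Polynomial.X - Polynomial.C (r i)))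
    -- `F(x) = c^{d²+d} ∏_{1 ≤ i,j ≤ d} (x - (r_i - r_j))`
    (F : Polynomial ℂ)
    (hF : F = Polynomial.C (c ^ (d ^ 2 + d)) *
      ∏ ij : Fin d × Fin d, (Polynomial.X - Polynomial.C (r ij.1 - r ij.2)))
    :
    ∃ G : Polynomial ℤ, G.map (Int.castRingHom ℂ) = F := by
  obtain ⟨p, hp⟩ := exists_int_map_eq_map (algebraMap ℚ ℂ) (Polynomial.C (t : ℚ) * f) (by simpa)
  exact hF ▸ stmt6_general _ p c r (hp.trans hroots) _ (by rw [Fintype.card_fin]; nlinarith)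

end
end

section
/- F(l) ≠ 0 for every nonzero integer l. -/
open scoped BigOperators Classical

noncomputable section

/-! Two roots of an irreducible polynomial are conjugate, that is, they have the same minimal
polynomial. If `x` and `x + a` are conjugate with `a` in the base field, then their common minimal
polynomial is invariant under the shift by `a`, so it takes one value at all the multiples of `a`.
In characteristic zero there are infinitely many of these unless `a = 0`, and a nonconstant
polynomial takes each value only finitely often. -/

section

open Polynomial Function

theorem natDegree_eq_zero_of_periodic_eval {R : Type*} [CommRing R] [IsDomain R] [CharZero R]
    {p : R[X]} {a : R} (ha : a ≠ 0) (hp : Periodic p.eval a) : p.natDegree = 0 := by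
  have hroot (n : ℕ) : IsRoot (p - C (p.eval 0)) (n * a) := by
    rw [IsRoot, eval_sub, eval_C, hp.nat_mul_eq, sub_self]
  have hinj : Injective fun n : ℕ ↦ n * a := (mul_left_injective₀ ha).comp Nat.cast_injective
  have hconst : p - C (p.eval 0) = 0 :=
    eq_zero_of_infinite_isRoot _ (Set.infinite_of_injective_forall_mem hinj hroot)
  rw [sub_eq_zero.1 hconst, natDegree_C]

theorem irreducible_C_mul {K : Type*} [Field K] {f : K[X]} (hf : Irreducible f) {t : K}
    (ht : t ≠ 0) : Irreducible (C t * f) :=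
  (irreducible_isUnit_mul (isUnit_C.2 ht.isUnit)).2 hf

section Conjugate

variable {K S : Type*} [Field K] [CommRing S] [Algebra K S]

theorem periodic_eval_minpoly_of_isConjRoot_add_algebraMap {x : S} {a : K}
    (h : IsConjRoot K x (x + algebraMap K S a)) : Periodic (minpoly K x).eval a := fun b ↦ by
  have hshift : minpoly K x = (minpoly K x).comp (X - C a) :=
    (isConjRoot_def.1 h).trans (minpoly.add_algebraMap x a)
  calc (minpoly K x).eval (b + a)
      = ((minpoly K x).comp (X - C a)).eval (b + a) := by rw [← hshift]
    _ = (minpoly K x).eval b := by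
      rw [eval_comp, eval_sub, eval_X, eval_C, add_sub_cancel_right]

variable [Nontrivial S]

theorem isConjRoot_of_irreducible_of_aeval_eq_zero {f : K[X]} (hf : Irreducible f) {x y : S}
    (hx : aeval x f = 0) (hy : aeval y f = 0) : IsConjRoot K x y :=
  (minpoly.eq_of_irreducible hf hx).symm.trans (minpoly.eq_of_irreducible hf hy)

theorem isConjRoot_add_algebraMap_iff [CharZero K] {x : S} (hx : IsIntegral K x) {a : K} :
    IsConjRoot K x (x + algebraMap K S a) ↔ a = 0 := by
  refine ⟨fun h ↦ ?_, fun ha ↦ by rw [ha, map_zero, add_zero]⟩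
  by_contra ha
  exact (minpoly.natDegree_pos hx).ne' <|
    natDegree_eq_zero_of_periodic_eval ha (periodic_eval_minpoly_of_isConjRoot_add_algebraMap h)

theorem eq_zero_of_algebraMap_eq_sub_of_irreducible [CharZero K] {f : K[X]} (hf : Irreducible f)
    {x y : S} (hx : aeval x f = 0) (hy : aeval y f = 0) {a : K} (ha : algebraMap K S a = x - y) :
    a = 0 := by
  have hy_int : IsIntegral K y := IsAlgebraic.isIntegral ⟨f, hf.ne_zero, hy⟩
  rw [← isConjRoot_add_algebraMap_iff hy_int, ha, add_sub_cancel]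
  exact isConjRoot_of_irreducible_of_aeval_eq_zero hf hy hx

end Conjugate

section DifferencePoly

variable {L ι : Type*} [CommRing L] [Fintype ι]

/-- The polynomial called `F` in the paper: for a family `r` of `d` elements, it is
`∏ i j, (X - (r i - r j))` multiplied by `c ^ (d ^ 2 + d)`. The diagonal pairs `i = j` are
included, so it has the root `0` as soon as `d` is positive. -/
def differencePoly (c : L) (r : ι → L) : L[X] :=
  C (c ^ (Fintype.card ι ^ 2 + Fintype.card ι)) * ∏ ij : ι × ι, (X - C (r ij.1 - r ij.2))

theorem eval_differencePoly_eq_zero_iff [IsDomain L] {c : L} (hc : c ≠ 0) {r : ι → L} {z : L} :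
    (differencePoly c r).eval z = 0 ↔ ∃ i j, z = r i - r j := by
  simp only [differencePoly, eval_mul, eval_C, eval_prod, eval_sub, eval_X, mul_eq_zero,
    pow_ne_zero _ hc, false_or, Finset.prod_eq_zero_iff, Finset.mem_univ, true_and, Prod.exists,
    sub_eq_zero]

theorem aeval_eq_zero_of_map_eq_C_mul_prod {K : Type*} [CommSemiring K] [Algebra K L] {f : K[X]}
    {c : L} {r : ι → L} (hf : f.map (algebraMap K L) = C c * ∏ i, (X - C (r i))) (i : ι) :
    aeval (r i) f = 0 := by
  rw [← eval_map_algebraMap, hf, eval_mul, eval_prod,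
    Finset.prod_eq_zero (Finset.mem_univ i) (by rw [eval_sub, eval_X, eval_C, sub_self]), mul_zero]

theorem stmt8_general [IsDomain L] {K : Type*} [Field K] [CharZero K] [Algebra K L] {f : K[X]}
    (hf : Irreducible f) {c : L} {r : ι → L}
    (hroots : f.map (algebraMap K L) = C c * ∏ i, (X - C (r i))) {a : K} (ha : a ≠ 0) :
    (differencePoly c r).eval (algebraMap K L a) ≠ 0 := by
  have hc : c ≠ 0 := by
    rintro rfl
    rw [C_0, zero_mul, Polynomial.map_eq_zero_iff (algebraMap K L).injective] at hroots
    exact hf.ne_zero hroots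
  rw [Ne, eval_differencePoly_eq_zero_iff hc]
  rintro ⟨i, j, hij⟩
  exact ha <| eq_zero_of_algebraMap_eq_sub_of_irreducible hf
    (aeval_eq_zero_of_map_eq_C_mul_prod hroots i) (aeval_eq_zero_of_map_eq_C_mul_prod hroots j) hij

end DifferencePoly

end

/-- **Lemma (iii).**  `F(l) ≠ 0` for every nonzero integer `l`. -/
theorem stmt8 (f : Polynomial ℚ) (d : ℕ) (hdeg : f.natDegree = d) (hd1 : 1 ≤ d)
    (hint : ∀ n : ℤ, ∃ m : ℤ, f.eval (n : ℚ) = (m : ℚ))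
    (hlead : 0 < f.leadingCoeff)
    (hirr : Irreducible f)
    -- `t` is the minimal positive integer with `t·f ∈ ℤ[x]`
    (t : ℕ) (ht : 0 < t)
    (htf : ∀ n : ℕ, ∃ m : ℤ, (t : ℚ) * f.coeff n = (m : ℚ))
    (htmin : ∀ t' : ℕ, 0 < t' → (∀ n : ℕ, ∃ m : ℤ, (t' : ℚ) * f.coeff n = (m : ℚ)) → t ≤ t')
    -- `c` is the leading coefficient of `f̃ = t·f` and `r 0, …, r (d-1)` its complex roots
    (c : ℂ) (hc : c = (t : ℂ) * (f.map (algebraMap ℚ ℂ)).leadingCoeff)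
    (r : Fin d → ℂ)
    (hroots : (Polynomial.C (t : ℚ) * f).map (algebraMap ℚ ℂ)
      = Polynomial.C c * ∏ i : Fin d, (Polynomial.X - Polynomial.C (r i)))
    -- `F(x) = c^{d²+d} ∏_{1 ≤ i,j ≤ d} (x - (r_i - r_j))`
    (F : Polynomial ℂ)
    (hF : F = Polynomial.C (c ^ (d ^ 2 + d)) *
      ∏ ij : Fin d × Fin d, (Polynomial.X - Polynomial.C (r ij.1 - r ij.2)))
    :
    ∀ l : ℤ, l ≠ 0 → F.eval ((l : ℤ) : ℂ) ≠ 0 := by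
  rw [show F = differencePoly c r by rw [hF, differencePoly, Fintype.card_fin]]
  exact fun l hl ↦ map_intCast (algebraMap ℚ ℂ) l ▸ stmt8_general
    (irreducible_C_mul hirr (Nat.cast_ne_zero.2 ht.ne')) hroots (Int.cast_ne_zero.2 hl)

end
end

section
/- For any irreducible polynomial g ∈ ℤ[x] of degree ≥ 1, there is a constant C_g such that for all x ≥ 2, ∑_{1 ≤ k ≤ x, g(k) ≠ 0} τ(|g(k)|) ≤ C_g · x · log x. -/
open scoped BigOperators Classical

noncomputable section

/-! Let `ρ(d)` be the number of roots of `g` modulo `d`. It is multiplicative, bounded on prime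
powers (a Bézout relation between `g` and its derivative separates the roots), and a modulus
`d ≤ N` divides `g(k)` for at most `2Nρ(d)/d` of the `k ≤ N`. Moreover
`∑_{p ≤ N} ρ(p)/p ≤ log log N + O(1)`: for almost all `p`, `ρ(p)` is at most the number of
degree-one primes above `p` in the field generated by a root of `g`, and the Dedekind zeta function
of that field has a simple pole at `1`. Hence `∑_{d ≤ N} ρ(d)/d ≪ log N`, which would settle the
matter if `τ(|g(k)|)` were controlled by the divisors of `g(k)` up to `N`.

That control comes from an argument of Erdős and Wolke. Write `|g(k)| = ab` with `a ≤ N` the largest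
product of the smallest prime factors of `g(k)`, and let `q` be the least prime factor of `b`. If
`q ^ s ≤ N < q ^ (s + 1)`, then `b` has at most `A(s + 1)` prime factors and
`τ(|g(k)|) ≤ 2 ^ (A(s + 1)) τ(a)`. The case `s < 2` is harmless. Otherwise `a > √N` is
`N ^ (1 / s)`-smooth, and at least half of its divisors exceed `N ^ (1 / 4)`; by Rankin's trick such
divisors contribute only `e ^ (-(A + 1)s) log N`, which beats the factor `2 ^ (A(s + 1))`. When `q`
is bounded, Rankin's trick saves a power of `N`, more than the loss in `τ(m) ≪ m ^ ε`. -/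

namespace PolynomialDivisorSum

open Polynomial Filter Topology

section Mertens

lemma sum_log_primeFactors_le (n : ℕ) : ∑ p ∈ n.primeFactors, Real.log p ≤ Real.log n := by
  have pos : ∀ p ∈ n.primeFactors, (0 : ℝ) < p := fun p hp ↦
    Nat.cast_pos.2 (Nat.prime_of_mem_primeFactors hp).pos
  rcases n.eq_zero_or_pos with rfl | hn
  · simp
  · rw [← Real.log_prod fun p hp ↦ (pos p hp).ne']
    refine Real.log_le_log (Finset.prod_pos pos) ?_
    rw [← Nat.cast_prod]
    exact Nat.cast_le.2 <| Nat.le_of_dvd hn n.prod_primeFactors_dvd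

lemma sum_primesLE_filter_dvd_log_le {N k : ℕ} (hk : k ∈ Finset.Ioc 0 N) :
    ∑ p ∈ N.primesLE with p ∣ k, Real.log p ≤ Real.log N := by
  obtain ⟨hk0, hkN⟩ := Finset.mem_Ioc.1 hk
  have primesLE_dvd : N.primesLE.filter (· ∣ k) = k.primeFactors := by
    ext p
    simp only [Finset.mem_filter, Nat.mem_primesLE, Nat.mem_primeFactors]
    exact ⟨fun h ↦ ⟨h.1.2, h.2, hk0.ne'⟩,
      fun h ↦ ⟨⟨(Nat.le_of_dvd hk0 h.2.1).trans hkN, h.1⟩, h.2.1⟩⟩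
  rw [primesLE_dvd]
  exact (sum_log_primeFactors_le k).trans
    (Real.log_le_log (by exact_mod_cast hk0) (by exact_mod_cast hkN))

lemma sum_primesLE_log_div_le (N : ℕ) :
    ∑ p ∈ N.primesLE, Real.log p / p ≤ Real.log N + Real.log 4 := by
  rcases N.eq_zero_or_pos with rfl | hN
  · simp [Real.log_nonneg]
  have hN0 : (0 : ℝ) < N := by exact_mod_cast hN
  have le_sum_dvd (p : ℕ) : N * (Real.log p / p) - Real.log p
      ≤ ∑ k ∈ Finset.Ioc 0 N, (if p ∣ k then Real.log p else 0) := by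
    rw [← Finset.sum_filter, Finset.sum_const, Nat.Ioc_filter_dvd_card_eq_div, nsmul_eq_mul,
      ← Nat.floor_div_eq_div (K := ℝ)]
    nlinarith [Nat.lt_floor_add_one ((N : ℝ) / p), Real.log_natCast_nonneg p,
      mul_div_left_comm (N : ℝ) (Real.log p) p]
  have theta_le : ∑ p ∈ N.primesLE, Real.log p ≤ Real.log 4 * N := by
    rw [← Chebyshev.theta_eq_sum_primesLE_log]
    exact Chebyshev.theta_le_log4_mul_x N.cast_nonneg
  have double_count : N * ∑ p ∈ N.primesLE, Real.log p / p - ∑ p ∈ N.primesLE, Real.log p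
      ≤ N * Real.log N := by
    calc N * ∑ p ∈ N.primesLE, Real.log p / p - ∑ p ∈ N.primesLE, Real.log p
        = ∑ p ∈ N.primesLE, (N * (Real.log p / p) - Real.log p) := by
          rw [Finset.sum_sub_distrib, Finset.mul_sum]
      _ ≤ ∑ p ∈ N.primesLE, ∑ k ∈ Finset.Ioc 0 N, (if p ∣ k then Real.log p else 0) :=
          Finset.sum_le_sum fun p _ ↦ le_sum_dvd p
      _ = ∑ k ∈ Finset.Ioc 0 N, ∑ p ∈ N.primesLE, (if p ∣ k then Real.log p else 0) :=
          Finset.sum_comm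
      _ ≤ ∑ _k ∈ Finset.Ioc 0 N, Real.log N := Finset.sum_le_sum fun k hk ↦ by
          rw [← Finset.sum_filter]
          exact sum_primesLE_filter_dvd_log_le hk
      _ = N * Real.log N := by simp
  refine le_of_mul_le_mul_left ?_ hN0
  linarith

lemma inv_le_log_one_add_rpow_neg_add {x δ : ℝ} (hx : 1 ≤ x) (hδ : 0 ≤ δ) :
    1 / x ≤ Real.log (1 + x ^ (-(1 + δ))) + 1 / x ^ 2 + δ * (Real.log x / x) := by
  have hx0 : 0 < x := by linarith
  set t := x ^ (-(1 + δ)) with ht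
  have ht0 : 0 < t := by positivity
  have t_eq : t = 1 / x * Real.exp (-(δ * Real.log x)) := by
    rw [ht, Real.rpow_def_of_pos hx0, one_div, ← Real.exp_log (inv_pos.2 hx0), Real.log_inv,
      ← Real.exp_add]
    ring_nf
  have t_le : t ≤ 1 / x := by
    rw [ht, one_div, ← Real.rpow_neg_one]
    exact Real.rpow_le_rpow_of_exponent_le hx (by linarith)
  have sq_le : t ^ 2 ≤ 1 / x ^ 2 := by
    rw [← one_div_pow]
    gcongr
  have sub_sq_le_log : t - t ^ 2 ≤ Real.log (1 + t) := by
    refine le_trans ?_ (Real.one_sub_inv_le_log_of_pos (by linarith : 0 < 1 + t))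
    rw [show 1 - (1 + t)⁻¹ = t / (1 + t) by field_simp; ring, le_div_iff₀ (by linarith)]
    nlinarith [pow_pos ht0 3]
  have inv_sub_le : 1 / x - t ≤ δ * (Real.log x / x) := by
    calc 1 / x - t = 1 / x * (1 - Real.exp (-(δ * Real.log x))) := by rw [t_eq]; ring
      _ ≤ 1 / x * (δ * Real.log x) := by
          gcongr
          linarith [Real.add_one_le_exp (-(δ * Real.log x))]
      _ = δ * (Real.log x / x) := by ring
  linarith

/- The shift `s = 1 + 1 / log N` costs only `O(1)`, by Mertens' bound for `∑ log p / p`. -/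
lemma sum_primesLE_div_le {a : ℕ → ℝ} {B : ℝ} (ha0 : ∀ p, 0 ≤ a p)
    (haB : ∀ p, p.Prime → a p ≤ B) {N : ℕ} (hN : 1 ≤ Real.log N) :
    ∑ p ∈ N.primesLE, a p / p
      ≤ ∑ p ∈ N.primesLE, a p * Real.log (1 + (p : ℝ) ^ (-(1 + 1 / Real.log N)))
        + B * (∑' n : ℕ, 1 / (n : ℝ) ^ 2 + 1 + Real.log 4) := by
  set L := Real.log N
  have hL : 0 ≤ 1 / L := by positivity
  have hB : 0 ≤ B := (ha0 2).trans (haB 2 Nat.prime_two)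
  have pointwise : ∀ p ∈ N.primesLE, a p / p ≤ a p * Real.log (1 + (p : ℝ) ^ (-(1 + 1 / L)))
      + (B * (1 / (p : ℝ) ^ 2) + B * (1 / L) * (Real.log p / p)) := fun p hp ↦ by
    have hpp := (Nat.mem_primesLE.1 hp).2
    have hp1 : (1 : ℝ) ≤ p := by exact_mod_cast hpp.one_le
    have : 0 ≤ Real.log p := Real.log_natCast_nonneg p
    calc a p / p = a p * (1 / p) := by ring
      _ ≤ a p * (Real.log (1 + (p : ℝ) ^ (-(1 + 1 / L))) + 1 / (p : ℝ) ^ 2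
          + 1 / L * (Real.log p / p)) :=
        mul_le_mul_of_nonneg_left (inv_le_log_one_add_rpow_neg_add hp1 hL) (ha0 p)
      _ = a p * Real.log (1 + (p : ℝ) ^ (-(1 + 1 / L)))
          + a p * (1 / (p : ℝ) ^ 2 + 1 / L * (Real.log p / p)) := by ring
      _ ≤ a p * Real.log (1 + (p : ℝ) ^ (-(1 + 1 / L)))
          + B * (1 / (p : ℝ) ^ 2 + 1 / L * (Real.log p / p)) := by
        gcongr
        exact haB p hpp
      _ = _ := by ring
  have sum_sq_le : ∑ p ∈ N.primesLE, 1 / (p : ℝ) ^ 2 ≤ ∑' n : ℕ, 1 / (n : ℝ) ^ 2 :=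
    (Real.summable_one_div_nat_pow.2 one_lt_two).sum_le_tsum _ fun _ _ ↦ by positivity
  have sum_log_le : 1 / L * ∑ p ∈ N.primesLE, Real.log p / p ≤ 1 + Real.log 4 := by
    have hlog4 : 0 ≤ Real.log 4 := Real.log_nonneg (by norm_num)
    rw [one_div, inv_mul_le_iff₀ (by linarith)]
    nlinarith [sum_primesLE_log_div_le N]
  refine (Finset.sum_le_sum pointwise).trans ?_
  rw [Finset.sum_add_distrib, Finset.sum_add_distrib, ← Finset.mul_sum, ← Finset.mul_sum, mul_assoc]
  nlinarith

end Mertens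

section RootCount

/-- The number `ρ(d)` of roots of the integer polynomial `g` in `ℤ/dℤ`. -/
def rootCount (g : ℤ[X]) (d : ℕ) : ℕ := Nat.card {r : ZMod d // aeval r g = 0}

lemma rootCount_one (g : ℤ[X]) : rootCount g 1 = 1 :=
  Nat.card_eq_one_iff_unique.2 ⟨inferInstance, ⟨⟨0, Subsingleton.elim _ _⟩⟩⟩

lemma rootCount_mul (g : ℤ[X]) {m n : ℕ} (h : m.Coprime n) :
    rootCount g (m * n) = rootCount g m * rootCount g n := by
  have root_iff (r : ZMod (m * n)) : aeval r g = 0 ↔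
      aeval (ZMod.chineseRemainder h r).1 g = 0 ∧ aeval (ZMod.chineseRemainder h r).2 g = 0 := by
    have map_aeval : ZMod.chineseRemainder h (aeval r g) = aeval (ZMod.chineseRemainder h r) g :=
      (aeval_algHom_apply (ZMod.chineseRemainder h).toRingHom.toIntAlgHom r g).symm
    rw [← map_eq_zero_iff (ZMod.chineseRemainder h) (ZMod.chineseRemainder h).injective, map_aeval,
      aeval_prod_apply, Prod.mk_eq_zero]
  rw [rootCount, rootCount, rootCount, ← Nat.card_prod]
  exact Nat.card_congr (((ZMod.chineseRemainder h).toEquiv.subtypeEquiv root_iff).trans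
    (Equiv.subtypeProdEquivProd (p := fun a : ZMod m ↦ aeval a g = 0)
      (q := fun b : ZMod n ↦ aeval b g = 0)))

lemma rootCount_le_self (g : ℤ[X]) (d : ℕ) [NeZero d] : rootCount g d ≤ d := by
  simpa [rootCount] using Nat.card_le_card_of_injective
    (fun r : {r : ZMod d // aeval r g = 0} ↦ r.1) Subtype.val_injective

lemma aeval_intCast_zmod_eq_zero_iff (g : ℤ[X]) (d : ℕ) (k : ℤ) :
    aeval (k : ZMod d) g = 0 ↔ (d : ℤ) ∣ g.eval k := by
  rw [← ZMod.intCast_zmod_eq_zero_iff_dvd, ← eq_intCast (algebraMap ℤ (ZMod d)),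
    aeval_algebraMap_apply_eq_algebraMap_eval, eq_intCast]

lemma dvd_eval_val_of_aeval_eq_zero {g : ℤ[X]} {d : ℕ} [NeZero d] {r : ZMod d}
    (hr : aeval r g = 0) : (d : ℤ) ∣ g.eval (r.val : ℤ) :=
  (aeval_intCast_zmod_eq_zero_iff g d r.val).1 (by simpa using hr)

lemma map_algebraMap_zmod_ne_zero {g : ℤ[X]} {p : ℕ} (hlc : ¬ (p : ℤ) ∣ g.leadingCoeff) :
    g.map (algebraMap ℤ (ZMod p)) ≠ 0 := fun h ↦ hlc <| by
  simpa [ZMod.intCast_zmod_eq_zero_iff_dvd] using congrArg (coeff · g.natDegree) h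

lemma rootCount_le_natDegree {g : ℤ[X]} {p : ℕ} (hp : p.Prime)
    (hlc : ¬ (p : ℤ) ∣ g.leadingCoeff) : rootCount g p ≤ g.natDegree := by
  have := Fact.mk hp
  set f := g.map (algebraMap ℤ (ZMod p))
  have hf0 : f ≠ 0 := map_algebraMap_zmod_ne_zero hlc
  calc rootCount g p ≤ Nat.card f.roots.toFinset := by
        refine Nat.card_le_card_of_injective (fun r ↦ ⟨r.1, ?_⟩) fun a b hab ↦ ?_
        · rw [Multiset.mem_toFinset, mem_roots hf0, IsRoot, eval_map_algebraMap]
          exact r.2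
        · simpa [Subtype.ext_iff] using hab
    _ = f.roots.toFinset.card := Nat.card_eq_finsetCard _
    _ ≤ f.roots.card := Multiset.toFinset_card_le _
    _ ≤ f.natDegree := card_roots' _
    _ ≤ g.natDegree := natDegree_map_le

lemma card_filter_dvd_eval_le (g : ℤ[X]) (N d : ℕ) [NeZero d] :
    ((Finset.Icc 1 N).filter fun k : ℕ ↦ (d : ℤ) ∣ g.eval (k : ℤ)).card
      ≤ rootCount g d * (N / d + 1) := by
  set S := (Finset.Icc 1 N).filter fun k : ℕ ↦ (d : ℤ) ∣ g.eval (k : ℤ)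
  calc S.card = Nat.card S := (Nat.card_eq_finsetCard S).symm
    _ ≤ Nat.card ({r : ZMod d // aeval r g = 0} × Fin (N / d + 1)) := by
        refine Nat.card_le_card_of_injective
          (fun k ↦ (⟨((k.1 : ℤ) : ZMod d), ?_⟩, ⟨k.1 / d, ?_⟩)) ?_
        · exact (aeval_intCast_zmod_eq_zero_iff g d k.1).2 (Finset.mem_filter.1 k.2).2
        · have hkN : k.1 ≤ N := (Finset.mem_Icc.1 (Finset.mem_filter.1 k.2).1).2
          exact Nat.lt_succ_of_le (Nat.div_le_div_right hkN)
        · rintro ⟨a, ha⟩ ⟨b, hb⟩ hab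
          simp only [Prod.mk.injEq, Subtype.mk.injEq, Fin.mk.injEq, Int.cast_natCast,
            ZMod.natCast_eq_natCast_iff'] at hab
          rw [Subtype.mk.injEq, ← Nat.div_add_mod a d, ← Nat.div_add_mod b d, hab.1, hab.2]
    _ = rootCount g d * (N / d + 1) := by rw [Nat.card_prod, Nat.card_fin, rootCount]

lemma card_filter_dvd_eval_le_mul_div (g : ℤ[X]) {N d : ℕ} (hd : d ∈ Finset.Icc 1 N) :
    (((Finset.Icc 1 N).filter fun k : ℕ ↦ (d : ℤ) ∣ g.eval (k : ℤ)).card : ℝ)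
      ≤ 2 * N * (rootCount g d / d) := by
  obtain ⟨hd1, hdN⟩ := Finset.mem_Icc.1 hd
  have : NeZero d := ⟨by omega⟩
  have hd0 : (0 : ℝ) < d := by exact_mod_cast hd1
  have one_le : (1 : ℝ) ≤ N / d := (one_le_div₀ hd0).2 (by exact_mod_cast hdN)
  have floor_le : ((N / d : ℕ) : ℝ) ≤ N / d := Nat.cast_div_le
  calc (((Finset.Icc 1 N).filter fun k : ℕ ↦ (d : ℤ) ∣ g.eval (k : ℤ)).card : ℝ)
      ≤ rootCount g d * ((N / d : ℕ) + 1) := by exact_mod_cast card_filter_dvd_eval_le g N d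
    _ ≤ rootCount g d * (2 * (N / d)) := by gcongr; linarith
    _ = 2 * N * (rootCount g d / d) := by ring

lemma pow_dvd_of_pow_dvd_mul_of_not_pow_dvd {M : Type*} [CommMonoidWithZero M]
    [IsCancelMulZero M] {p a b : M} (hp : Prime p) {e j : ℕ} (hab : p ^ j ∣ a * b)
    (hb : ¬ p ^ (e + 1) ∣ b) : p ^ (j - e) ∣ a := by
  rw [pow_dvd_iff_le_emultiplicity, emultiplicity_mul hp] at hab
  have hbe : emultiplicity p b ≤ e :=
    (ENat.lt_add_one_iff (ENat.natCast_ne_top e)).1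
      (by exact_mod_cast emultiplicity_lt_iff_not_dvd.2 hb)
  rw [pow_dvd_iff_le_emultiplicity, ENat.natCast_sub, tsub_le_iff_right]
  exact hab.trans (by gcongr)

/- The Taylor expansion `g k' - g k = (k' - k) (g' k + w (k' - k))` and the Bézout identity, which
keeps `g' k` from being divisible by `p ^ (e + 1)`, replace Hensel's lemma at the bad primes. -/
lemma pow_sub_dvd_sub_of_pow_dvd_eval {g u v : ℤ[X]} {D : ℤ}
    (hD : u * g + v * derivative g = C D) {p : ℕ} (hp : p.Prime) {e j : ℕ}
    (he : ¬ (p : ℤ) ^ (e + 1) ∣ D) (hj : e + 1 ≤ j) {k k' : ℤ} (hk : (p : ℤ) ^ j ∣ g.eval k)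
    (hk' : (p : ℤ) ^ j ∣ g.eval k') (hkk' : (p : ℤ) ^ (e + 1) ∣ k' - k) :
    (p : ℤ) ^ (j - e) ∣ k' - k := by
  obtain ⟨w, hw⟩ := g.binomExpansion k (k' - k)
  rw [add_sub_cancel] at hw
  have taylor : (k' - k) * ((derivative g).eval k + w * (k' - k)) = g.eval k' - g.eval k := by
    rw [hw]; ring
  refine pow_dvd_of_pow_dvd_mul_of_not_pow_dvd (Nat.prime_iff_prime_int.1 hp)
    (taylor ▸ dvd_sub hk' hk) fun hdvd ↦ he ?_
  have hderiv : (p : ℤ) ^ (e + 1) ∣ (derivative g).eval k :=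
    (dvd_add_left (hkk'.mul_left w)).1 hdvd
  have bezout : u.eval k * g.eval k + v.eval k * (derivative g).eval k = D := by
    simpa using congrArg (eval k) hD
  rw [← bezout]
  exact dvd_add (((pow_dvd_pow _ hj).trans hk).mul_left _) (hderiv.mul_left _)

lemma rootCount_pow_le_mul {g u v : ℤ[X]} {D : ℤ} (hD : u * g + v * derivative g = C D)
    {p : ℕ} (hp : p.Prime) {e j : ℕ} (he : ¬ (p : ℤ) ^ (e + 1) ∣ D) (hj : e + 1 ≤ j) :
    rootCount g (p ^ j) ≤ rootCount g (p ^ (e + 1)) * p ^ e := by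
  have (i : ℕ) : NeZero (p ^ i) := ⟨(pow_pos hp.pos i).ne'⟩
  have dvd_eval (r : {r : ZMod (p ^ j) // aeval r g = 0}) : (p : ℤ) ^ j ∣ g.eval (r.1.val : ℤ) :=
    mod_cast dvd_eval_val_of_aeval_eq_zero r.2
  have card_eq : rootCount g (p ^ (e + 1)) * p ^ e
      = Nat.card ({r : ZMod (p ^ (e + 1)) // aeval r g = 0} × Fin (p ^ e)) := by
    rw [Nat.card_prod, Nat.card_fin, rootCount]
  rw [card_eq]
  refine Nat.card_le_card_of_injective
    (fun r ↦ (⟨((r.1.val : ℤ) : ZMod (p ^ (e + 1))), ?_⟩, ⟨r.1.val / p ^ (j - e), ?_⟩)) ?_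
  · rw [aeval_intCast_zmod_eq_zero_iff]
    exact_mod_cast (pow_dvd_pow (p : ℤ) hj).trans (dvd_eval r)
  · rw [Nat.div_lt_iff_lt_mul (pow_pos hp.pos _), ← pow_add, Nat.add_sub_cancel' (by omega)]
    exact r.1.val_lt
  · intro r r' hrr'
    simp only [Prod.mk.injEq, Subtype.mk.injEq, Fin.mk.injEq,
      ZMod.intCast_eq_intCast_iff_dvd_sub] at hrr'
    have hmod : r.1.val % p ^ (j - e) = r'.1.val % p ^ (j - e) := by
      refine Nat.modEq_iff_dvd.2 ?_
      exact_mod_cast pow_sub_dvd_sub_of_pow_dvd_eval hD hp he hj (dvd_eval r) (dvd_eval r')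
        (mod_cast hrr'.1)
    refine Subtype.ext (ZMod.val_injective _ ?_)
    rw [← Nat.div_add_mod r.1.val (p ^ (j - e)), ← Nat.div_add_mod r'.1.val (p ^ (j - e)), hmod,
      hrr'.2]

lemma exists_mul_add_mul_derivative_eq_C {g : ℤ[X]}
    (hg : (g.map (Int.castRingHom ℚ)).Separable) :
    ∃ (u v : ℤ[X]) (D : ℤ), D ≠ 0 ∧ u * g + v * derivative g = C D := by
  obtain ⟨a, b, hab⟩ := hg
  obtain ⟨c, hc, hA⟩ := IsLocalization.integerNormalization_spec (nonZeroDivisors ℤ) a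
  obtain ⟨d, hd, hB⟩ := IsLocalization.integerNormalization_spec (nonZeroDivisors ℤ) b
  set A := IsLocalization.integerNormalization (nonZeroDivisors ℤ) a
  set B := IsLocalization.integerNormalization (nonZeroDivisors ℤ) b
  refine ⟨C d * A, C c * B, c * d,
    mul_ne_zero (nonZeroDivisors.ne_zero hc) (nonZeroDivisors.ne_zero hd), ?_⟩
  have hA' : A.map (Int.castRingHom ℚ) = C (c : ℚ) * a := by
    rw [show A.map (Int.castRingHom ℚ) = c • a from hA, zsmul_eq_mul, map_intCast]
  have hB' : B.map (Int.castRingHom ℚ) = C (d : ℚ) * b := by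
    rw [show B.map (Int.castRingHom ℚ) = d • b from hB, zsmul_eq_mul, map_intCast]
  apply Polynomial.map_injective (Int.castRingHom ℚ) Int.cast_injective
  rw [derivative_map] at hab
  simp only [Polynomial.map_add, Polynomial.map_mul, hA', hB', Polynomial.map_C, C_mul,
    Int.coe_castRingHom]
  linear_combination (C (c : ℚ) * C (d : ℚ)) * hab

lemma exists_rootCount_prime_pow_le {g : ℤ[X]} (hg : (g.map (Int.castRingHom ℚ)).Separable) :
    ∃ B : ℕ, ∀ p j : ℕ, p.Prime → rootCount g (p ^ j) ≤ B := by
  have hlc : g.leadingCoeff ≠ 0 := by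
    rw [leadingCoeff_ne_zero]; rintro rfl; simp [not_separable_zero] at hg
  obtain ⟨u, v, D₀, hD₀, hbezout⟩ := exists_mul_add_mul_derivative_eq_C hg
  set D := g.leadingCoeff * D₀ with hD_def
  have hD0 : D ≠ 0 := mul_ne_zero hlc hD₀
  have hD : C g.leadingCoeff * u * g + C g.leadingCoeff * v * derivative g = C D := by
    rw [hD_def, C_mul, ← hbezout]; ring
  have hD1 : 1 ≤ D.natAbs := Int.natAbs_pos.2 hD0
  refine ⟨max g.natDegree (D.natAbs ^ 3), fun p j hp ↦ ?_⟩
  have (i : ℕ) : NeZero (p ^ i) := ⟨(pow_pos hp.pos i).ne'⟩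
  obtain ⟨e, m, hm, hem⟩ :=
    Nat.exists_eq_pow_mul_and_not_dvd (Nat.pos_iff_ne_zero.1 hD1) p hp.ne_one
  have hpe : p ^ e ≤ D.natAbs := Nat.le_of_dvd hD1 ⟨m, hem⟩
  rcases Nat.lt_or_ge e j with hj | hj
  · have he : ¬ (p : ℤ) ^ (e + 1) ∣ D := by
      rw [← Int.natAbs_dvd_natAbs, Int.natAbs_pow, Int.natAbs_natCast, hem, pow_succ]
      exact fun h ↦ hm (Nat.dvd_of_mul_dvd_mul_left (pow_pos hp.pos e) h)
    have hle := rootCount_pow_le_mul hD hp he hj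
    rcases Nat.eq_zero_or_pos e with rfl | he0
    · have hp_lc : ¬ (p : ℤ) ∣ g.leadingCoeff := fun h ↦ he (by simpa using h.mul_right D₀)
      exact le_max_of_le_left (hle.trans (by simpa using rootCount_le_natDegree hp hp_lc))
    · have hp_le : p ≤ D.natAbs := (Nat.le_self_pow he0.ne' p).trans hpe
      refine le_max_of_le_right ?_
      calc rootCount g (p ^ j) ≤ p ^ e * p * p ^ e :=
            hle.trans (Nat.mul_le_mul_right _ (rootCount_le_self g _))
        _ ≤ D.natAbs * D.natAbs * D.natAbs := by gcongr
        _ = D.natAbs ^ 3 := by ring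
  · refine le_max_of_le_right ?_
    calc rootCount g (p ^ j) ≤ p ^ j := rootCount_le_self g _
      _ ≤ p ^ e := Nat.pow_le_pow_right hp.pos hj
      _ ≤ D.natAbs ^ 3 := hpe.trans (Nat.le_self_pow (by norm_num) _)

end RootCount

section NumberField

open NumberField IntermediateField

lemma exists_intCast_mul_mem_adjoin {K : Type*} [Field K] [NumberField K] (θ : 𝓞 K)
    (hθ : ℚ⟮(θ : K)⟯ = ⊤) :
    ∃ d : ℤ, d ≠ 0 ∧ ∀ z : 𝓞 K, (d : 𝓞 K) * z ∈ Algebra.adjoin ℤ {θ} := by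
  let B : PowerBasis ℚ K := (adjoin.powerBasis (θ.isIntegral_coe.tower_top (A := ℚ))).map
    ((equivOfEq hθ).trans topEquiv)
  have hgen : B.gen = (θ : K) := by
    simp [B, adjoin.powerBasis_gen]
  have hgenint : IsIntegral ℤ B.gen := hgen ▸ θ.isIntegral_coe
  have hdiscr : IsIntegral ℤ (Algebra.discr ℚ B.basis) :=
    Algebra.discr_isIntegral _ fun i ↦ by rw [B.basis_eq_pow]; exact hgenint.pow _
  obtain ⟨d, hd⟩ := IsIntegrallyClosed.isIntegral_iff.1 hdiscr
  refine ⟨d, ?_, fun z ↦ ?_⟩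
  · rintro rfl
    exact Algebra.discr_not_zero_of_basis ℚ B.basis (by rw [← hd, map_zero])
  · have hmem : algebraMap (𝓞 K) K (d * z) ∈ Algebra.adjoin ℤ {(θ : K)} := by
      have := Algebra.discr_mul_isIntegral_mem_adjoin ℚ hgenint z.isIntegral_coe
      rw [← hd, hgen] at this
      simpa [Algebra.smul_def] using this
    have hadjoin : Algebra.adjoin ℤ {(θ : K)}
        = (Algebra.adjoin ℤ {θ}).map (IsScalarTower.toAlgHom ℤ (𝓞 K) K) := by
      rw [AlgHom.map_adjoin, Set.image_singleton]; rfl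
    rw [hadjoin] at hmem
    obtain ⟨w, hw, hwz⟩ := hmem
    rwa [← RingOfIntegers.coe_injective (by exact hwz : (w : K) = ((d * z : 𝓞 K) : K))]

lemma exponent_ne_zero {K : Type*} [Field K] [NumberField K] {θ : 𝓞 K}
    (hθ : ℚ⟮(θ : K)⟯ = ⊤) : RingOfIntegers.exponent θ ≠ 0 := by
  obtain ⟨d, hd0, hd⟩ := exists_intCast_mul_mem_adjoin θ hθ
  rw [RingOfIntegers.exponent, Ne, Ideal.absNorm_eq_zero_iff]
  intro hbot
  have hmem : d ∈ Ideal.under ℤ (conductor ℤ θ) := by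
    rw [Ideal.mem_comap, mem_conductor_iff]
    simpa using hd
  rw [hbot] at hmem
  exact hd0 (by simpa using hmem)

/-- The number of prime ideals of norm `n` in the ring of integers of the number field `K`; for a
prime `n` these are the primes of degree one above `n`. -/
def primeIdealCount (K : Type*) [Field K] [NumberField K] (n : ℕ) : ℕ :=
  Nat.card {P : Ideal (𝓞 K) // P.IsPrime ∧ Ideal.absNorm P = n}

lemma finite_setOf_isPrime_absNorm_eq (K : Type*) [Field K] [NumberField K] (n : ℕ) :
    {P : Ideal (𝓞 K) | P.IsPrime ∧ Ideal.absNorm P = n}.Finite :=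
  (Ideal.finite_setOfPred_absNorm_eq n).subset fun _ hP ↦ hP.2

lemma rootCount_minpoly_le_primeIdealCount {K : Type*} [Field K] [NumberField K] {θ : 𝓞 K}
    {p : ℕ} [Fact p.Prime] (hp : ¬ p ∣ RingOfIntegers.exponent θ) :
    rootCount (minpoly ℤ θ) p ≤ primeIdealCount K p := by
  have : Finite {P : Ideal (𝓞 K) // P.IsPrime ∧ Ideal.absNorm P = p} :=
    (finite_setOf_isPrime_absNorm_eq K p).to_subtype
  have linear_factor (r : {r : ZMod p // aeval r (minpoly ℤ θ) = 0}) :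
      X - C r.1 ∈ RingOfIntegers.monicFactorsMod θ p := by
    have hne : (minpoly ℤ θ).map (Int.castRingHom (ZMod p)) ≠ 0 :=
      map_monic_ne_zero (minpoly.monic θ.isIntegral)
    rw [Multiset.mem_toFinset, Polynomial.mem_normalizedFactors_iff hne]
    refine ⟨irreducible_X_sub_C _, monic_X_sub_C _, ?_⟩
    rw [dvd_iff_isRoot, IsRoot, eval_map]
    exact r.2
  let e := NumberField.Ideal.primesOverSpanEquivMonicFactorsMod hp
  refine Nat.card_le_card_of_injective
    (fun r ↦ ⟨(e.symm ⟨_, linear_factor r⟩).1, (e.symm ⟨_, linear_factor r⟩).2.1, ?_⟩) ?_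
  · have hdeg := NumberField.Ideal.inertiaDeg_primesOverSpanEquivMonicFactorsMod_symm_apply' hp
      (linear_factor r)
    have := (e.symm ⟨_, linear_factor r⟩).2.1
    have := (e.symm ⟨_, linear_factor r⟩).2.2
    rw [← Ideal.pow_inertiaDeg p, hdeg, natDegree_X_sub_C, pow_one]
  · intro r r' hrr'
    have := e.symm.injective (Subtype.ext (Subtype.mk.inj hrr'))
    simpa only [Subtype.mk.injEq, sub_right_inj, C_inj, Subtype.ext_iff] using this

lemma rootCount_le_rootCount_integralNormalization {g : ℤ[X]} (hdeg : 1 ≤ g.natDegree) {p : ℕ}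
    [Fact p.Prime] (hp : ¬ (p : ℤ) ∣ g.leadingCoeff) :
    rootCount g p ≤ rootCount (integralNormalization g) p := by
  have hlc : algebraMap ℤ (ZMod p) g.leadingCoeff ≠ 0 := by
    rwa [eq_intCast, Ne, ZMod.intCast_zmod_eq_zero_iff_dvd]
  refine Nat.card_le_card_of_injective
    (fun r ↦ ⟨algebraMap ℤ (ZMod p) g.leadingCoeff * r.1, ?_⟩) fun r r' hrr' ↦ ?_
  · have := integralNormalization_eval₂_leadingCoeff_mul hdeg (algebraMap ℤ (ZMod p)) r.1
    rwa [← aeval_def r.1 g, r.2, mul_zero] at this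
  · exact Subtype.ext (mul_left_cancel₀ hlc (Subtype.mk.inj hrr'))

lemma minpoly_eq_integralNormalization {K : Type*} [Field K] [NumberField K] {g : ℤ[X]} {x : K}
    (hx : aeval x g = 0) (hdeg : Module.finrank ℚ K = g.natDegree) {θ : 𝓞 K}
    (hθx : (θ : K) = algebraMap ℤ K g.leadingCoeff * x) (hθ : ℚ⟮(θ : K)⟯ = ⊤) :
    minpoly ℤ θ = integralNormalization g := by
  have hg0 : g ≠ 0 := by
    rintro rfl
    exact Module.finrank_pos.ne' (hdeg.trans natDegree_zero)
  have hroot : aeval θ (integralNormalization g) = 0 := by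
    have hroot_K := integralNormalization_aeval_eq_zero hx
      ((injective_iff_map_eq_zero _).1 (algebraMap ℤ K).injective_int)
    rw [← hθx] at hroot_K
    refine RingOfIntegers.coe_injective ?_
    rwa [← aeval_algebraMap_apply, map_zero]
  have hdegree : (minpoly ℤ θ).natDegree = g.natDegree := by
    rw [← natDegree_map_eq_of_injective (f := algebraMap ℤ ℚ) Int.cast_injective (minpoly ℤ θ),
      ← minpoly.algebraMap_eq RingOfIntegers.coe_injective θ,
      ← minpoly.isIntegrallyClosed_eq_field_fractions' ℚ θ.isIntegral_coe, ← hdeg,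
      ← adjoin.finrank θ.isIntegral_coe.tower_top, hθ, finrank_top']
  refine (eq_of_monic_of_dvd_of_natDegree_le (minpoly.monic θ.isIntegral)
    (monic_integralNormalization hg0) (minpoly.isIntegrallyClosed_dvd θ.isIntegral hroot) ?_).symm
  rw [hdegree, natDegree_integralNormalization]

lemma exists_numberField_aeval_eq_zero {g : ℤ[X]}
    (hg : Irreducible (g.map (Int.castRingHom ℚ))) :
    ∃ (K : Type) (_ : Field K) (_ : NumberField K) (x : K),
      aeval x g = 0 ∧ ℚ⟮x⟯ = ⊤ ∧ Module.finrank ℚ K = g.natDegree := by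
  have := Fact.mk hg
  let B := AdjoinRoot.powerBasis hg.ne_zero
  have hchar : CharZero (AdjoinRoot (g.map (Int.castRingHom ℚ))) :=
    charZero_of_injective_algebraMap (algebraMap ℚ _).injective
  have hfin : FiniteDimensional ℚ (AdjoinRoot (g.map (Int.castRingHom ℚ))) := B.finite
  refine ⟨AdjoinRoot (g.map (Int.castRingHom ℚ)), inferInstance, ⟨⟩, AdjoinRoot.root _, ?_, ?_, ?_⟩
  · have := AdjoinRoot.eval₂_root (g.map (Int.castRingHom ℚ))
    rwa [eval₂_map, RingHom.eq_intCast' ((AdjoinRoot.of _).comp _),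
      ← RingHom.eq_intCast' (algebraMap ℤ _)] at this
  · exact (adjoin_simple_eq_top_iff_of_isAlgebraic (Algebra.IsAlgebraic.isAlgebraic _)).2
      AdjoinRoot.adjoinRoot_eq_top
  · rw [B.finrank, AdjoinRoot.powerBasis_dim, natDegree_map_eq_of_injective Int.cast_injective]

lemma exists_rootCount_le_primeIdealCount {g : ℤ[X]}
    (hg : Irreducible (g.map (Int.castRingHom ℚ))) :
    ∃ (K : Type) (_ : Field K) (_ : NumberField K) (E : ℕ), E ≠ 0 ∧
      ∀ p : ℕ, p.Prime → ¬ p ∣ E → rootCount g p ≤ primeIdealCount K p := by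
  obtain ⟨K, _, _, x, hx, hxtop, hdeg⟩ := exists_numberField_aeval_eq_zero hg
  have hg0 : g ≠ 0 := by rintro rfl; simp at hg
  have hlc : g.leadingCoeff ≠ 0 := leadingCoeff_ne_zero.2 hg0
  let θ : 𝓞 K := ⟨algebraMap ℤ K g.leadingCoeff * x, integralNormalization g,
    monic_integralNormalization hg0,
    integralNormalization_aeval_eq_zero hx
      ((injective_iff_map_eq_zero _).1 (algebraMap ℤ K).injective_int)⟩
  have hθ : ℚ⟮(θ : K)⟯ = ⊤ := by
    have hlcK : (g.leadingCoeff : K) ≠ 0 := Int.cast_ne_zero.2 hlc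
    have hx_eq : x = (g.leadingCoeff : K)⁻¹ * θ := by
      change x = _ * (algebraMap ℤ K g.leadingCoeff * x)
      rw [eq_intCast, inv_mul_cancel_left₀ hlcK]
    rw [← top_le_iff, ← hxtop, adjoin_simple_le_iff, hx_eq]
    exact mul_mem (inv_mem (intCast_mem _ _)) (mem_adjoin_simple_self ℚ _)
  refine ⟨K, inferInstance, inferInstance, RingOfIntegers.exponent θ * g.leadingCoeff.natAbs,
    mul_ne_zero (exponent_ne_zero hθ) (Int.natAbs_ne_zero.2 hlc), fun p hp hpE ↦ ?_⟩
  have := Fact.mk hp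
  have hp_exponent : ¬ p ∣ RingOfIntegers.exponent θ := fun h ↦ hpE (h.mul_right _)
  have hp_lc : ¬ (p : ℤ) ∣ g.leadingCoeff :=
    fun h ↦ hpE ((Int.natCast_dvd.1 h).mul_left _)
  calc rootCount g p ≤ rootCount (integralNormalization g) p :=
        rootCount_le_rootCount_integralNormalization (hdeg ▸ Module.finrank_pos) hp_lc
    _ = rootCount (minpoly ℤ θ) p := by rw [minpoly_eq_integralNormalization hx hdeg rfl hθ]
    _ ≤ primeIdealCount K p := rootCount_minpoly_le_primeIdealCount hp_exponent

lemma primeIdealCount_le_finrank (K : Type*) [Field K] [NumberField K] {p : ℕ} (hp : p.Prime) :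
    primeIdealCount K p ≤ Module.finrank ℚ K := by
  set S := (finite_setOf_isPrime_absNorm_eq K p).toFinset with hS
  have mem_S {P : Ideal (𝓞 K)} : P ∈ S ↔ P.IsPrime ∧ Ideal.absNorm P = p := by simp [hS]
  have prod_dvd : ∏ P ∈ S, P ∣ Ideal.span {(p : 𝓞 K)} := by
    refine Finset.prod_primes_dvd _ (fun P hP ↦ ?_) fun P hP ↦ ?_
    · refine Ideal.prime_of_isPrime ?_ (mem_S.1 hP).1
      rintro rfl
      exact hp.ne_zero ((mem_S.1 hP).2.symm.trans Ideal.absNorm_bot)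
    · rw [Ideal.dvd_span_singleton, ← (mem_S.1 hP).2]
      exact Ideal.absNorm_mem P
  have norm_dvd : p ^ S.card ∣ p ^ Module.finrank ℚ K := by
    have := map_dvd Ideal.absNorm prod_dvd
    rwa [map_prod, Finset.prod_congr rfl fun P hP ↦ (mem_S.1 hP).2, Finset.prod_const,
      Ideal.absNorm_span_natCast, RingOfIntegers.rank] at this
  calc primeIdealCount K p = S.card :=
        Set.ncard_eq_toFinset_card _ (finite_setOf_isPrime_absNorm_eq K p)
    _ ≤ Module.finrank ℚ K := (Nat.pow_dvd_pow_iff_le_right hp.one_lt).1 norm_dvd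

/-- The number of ideals of norm `n` in the ring of integers of the number field `K`, the `n`-th
coefficient of the Dedekind zeta function. -/
def idealCount (K : Type*) [Field K] [NumberField K] (n : ℕ) : ℕ :=
  Nat.card {I : Ideal (𝓞 K) // Ideal.absNorm I = n}

lemma sum_absNorm_rpow_neg_le_tsum (K : Type*) [Field K] [NumberField K] {s : ℝ}
    (hs : Summable fun n : ℕ ↦ (idealCount K n : ℝ) * (n : ℝ) ^ (-s))
    (F : Finset (Ideal (𝓞 K))) :
    ∑ I ∈ F, (Ideal.absNorm I : ℝ) ^ (-s)
      ≤ ∑' n : ℕ, (idealCount K n : ℝ) * (n : ℝ) ^ (-s) := by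
  have card_fiber (n : ℕ) : (F.filter fun I ↦ Ideal.absNorm I = n).card
      ≤ idealCount K n := by
    have : Finite {I : Ideal (𝓞 K) // Ideal.absNorm I = n} := Ideal.finite_setOfPred_absNorm_eq n
    rw [← Nat.card_eq_finsetCard]
    exact Nat.card_le_card_of_injective (fun I ↦ ⟨I.1, (Finset.mem_filter.1 I.2).2⟩)
      fun I J hIJ ↦ Subtype.ext (Subtype.mk.inj hIJ)
  calc ∑ I ∈ F, (Ideal.absNorm I : ℝ) ^ (-s)
      = ∑ n ∈ F.image Ideal.absNorm,
          ∑ I ∈ F with Ideal.absNorm I = n, (Ideal.absNorm I : ℝ) ^ (-s) :=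
        (Finset.sum_fiberwise_of_maps_to (fun I hI ↦ Finset.mem_image_of_mem _ hI) _).symm
    _ = ∑ n ∈ F.image Ideal.absNorm,
          ((F.filter fun I ↦ Ideal.absNorm I = n).card : ℝ) * (n : ℝ) ^ (-s) := by
        refine Finset.sum_congr rfl fun n _ ↦ ?_
        rw [← nsmul_eq_mul]
        exact Finset.sum_eq_card_nsmul fun I hI ↦ by rw [(Finset.mem_filter.1 hI).2]
    _ ≤ ∑ n ∈ F.image Ideal.absNorm,
          (idealCount K n : ℝ) * (n : ℝ) ^ (-s) := by
        gcongr with n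
        exact card_fiber n
    _ ≤ _ := hs.sum_le_tsum _ fun _ _ ↦ by positivity

lemma dedekindZeta_ofReal (K : Type*) [Field K] [NumberField K] {s : ℝ} (hs : s ≠ 0) :
    dedekindZeta K s = ((∑' n : ℕ, (idealCount K n : ℝ) * (n : ℝ) ^ (-s) : ℝ) : ℂ) := by
  rw [dedekindZeta, LSeries, Complex.ofReal_tsum]
  refine tsum_congr fun n ↦ ?_
  rw [LSeries.term_def]
  split_ifs with hn
  · rw [hn, Nat.cast_zero, Real.zero_rpow (neg_ne_zero.2 hs), mul_zero, Complex.ofReal_zero]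
  · rw [Real.rpow_neg n.cast_nonneg, ← div_eq_mul_inv]
    push_cast [Complex.ofReal_cpow n.cast_nonneg]
    rfl

lemma exists_sum_absNorm_rpow_neg_le (K : Type*) [Field K] [NumberField K] :
    ∃ C : ℝ, 0 < C ∧ ∀ᶠ s : ℝ in 𝓝[>] 1, ∀ F : Finset (Ideal (𝓞 K)),
      ∑ I ∈ F, (Ideal.absNorm I : ℝ) ^ (-s) ≤ C / (s - 1) := by
  let Z (s : ℝ) : ℝ := ∑' n : ℕ, (idealCount K n : ℝ) * (n : ℝ) ^ (-s)
  have residue_pos : 0 < dedekindZeta_residue K := dedekindZeta_residue_pos K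
  have tendsto_residue : Tendsto (fun s : ℝ ↦ (s - 1) * Z s) (𝓝[>] 1)
      (𝓝 (dedekindZeta_residue K)) := by
    refine ((Complex.continuous_re.tendsto _).comp
      (tendsto_sub_one_mul_dedekindZeta_nhdsGT K)).congr' ?_
    filter_upwards [self_mem_nhdsWithin] with s (hs : 1 < s)
    rw [Function.comp_apply, dedekindZeta_ofReal K (zero_lt_one.trans hs).ne', ← Complex.ofReal_one,
      ← Complex.ofReal_sub, ← Complex.ofReal_mul, Complex.ofReal_re]
  refine ⟨dedekindZeta_residue K + 1, by linarith, ?_⟩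
  filter_upwards [tendsto_residue.eventually_lt_const (lt_add_one _),
    tendsto_residue.eventually_const_lt residue_pos, self_mem_nhdsWithin] with s hlt hpos hs F
  have summable : Summable fun n : ℕ ↦ (idealCount K n : ℝ) * (n : ℝ) ^ (-s) := by
    by_contra hns
    exact hpos.ne' (mul_eq_zero_of_right _ (tsum_eq_zero_of_not_summable hns))
  refine (sum_absNorm_rpow_neg_le_tsum K summable F).trans ?_
  rw [le_div_iff₀ (sub_pos.2 hs), mul_comm]
  exact hlt.le

lemma injOn_prod_of_prime {M : Type*} [CommMonoidWithZero M] [IsCancelMulZero M]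
    [Subsingleton Mˣ] {S : Finset M} (hS : ∀ p ∈ S, Prime p) :
    Set.InjOn (fun T : Finset M ↦ ∏ p ∈ T, p) S.powerset := by
  have mem_iff_dvd {T : Finset M} (hT : T ⊆ S) {p : M} (hp : p ∈ S) :
      p ∈ T ↔ p ∣ ∏ q ∈ T, q := by
    refine ⟨Finset.dvd_prod_of_mem _, fun h ↦ ?_⟩
    obtain ⟨q, hq, hpq⟩ := ((hS p hp).dvd_finsetProd_iff _).1 h
    rwa [associated_iff_eq.1 (((hS p hp).dvd_prime_iff_associated (hS q (hT hq))).1 hpq)]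
  intro T hT T' hT' h
  rw [Finset.mem_coe, Finset.mem_powerset] at hT hT'
  dsimp only at h
  ext p
  exact ⟨fun hp ↦ (mem_iff_dvd hT' (hT hp)).2 (h ▸ (mem_iff_dvd hT (hT hp)).1 hp),
    fun hp ↦ (mem_iff_dvd hT (hT' hp)).2 (h ▸ (mem_iff_dvd hT' (hT' hp)).1 hp)⟩

lemma prod_one_add_absNorm_rpow_le {K : Type*} [Field K] [NumberField K] {s c : ℝ}
    (hc : ∀ F : Finset (Ideal (𝓞 K)), ∑ I ∈ F, (Ideal.absNorm I : ℝ) ^ (-s) ≤ c)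
    {S : Finset (Ideal (𝓞 K))} (hS : ∀ P ∈ S, Prime P) :
    ∏ P ∈ S, (1 + (Ideal.absNorm P : ℝ) ^ (-s)) ≤ c := by
  calc ∏ P ∈ S, (1 + (Ideal.absNorm P : ℝ) ^ (-s))
      = ∑ T ∈ S.powerset, ∏ P ∈ T, (Ideal.absNorm P : ℝ) ^ (-s) := Finset.prod_one_add _
    _ = ∑ T ∈ S.powerset, (Ideal.absNorm (∏ P ∈ T, P) : ℝ) ^ (-s) := by
        refine Finset.sum_congr rfl fun T _ ↦ ?_
        rw [map_prod, Nat.cast_prod, Real.finsetProd_rpow _ _ fun _ _ ↦ Nat.cast_nonneg _]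
    _ = ∑ I ∈ S.powerset.image fun T ↦ ∏ P ∈ T, P, (Ideal.absNorm I : ℝ) ^ (-s) :=
        (Finset.sum_image (f := fun I ↦ (Ideal.absNorm I : ℝ) ^ (-s))
          (injOn_prod_of_prime hS)).symm
    _ ≤ c := hc _

lemma sum_primeIdealCount_mul_log_le {K : Type*} [Field K] [NumberField K] {s c : ℝ}
    (hc : ∀ F : Finset (Ideal (𝓞 K)), ∑ I ∈ F, (Ideal.absNorm I : ℝ) ^ (-s) ≤ c)
    {A : Finset ℕ} (hA : ∀ p ∈ A, p ≠ 0) :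
    ∑ p ∈ A, (primeIdealCount K p : ℝ) * Real.log (1 + (p : ℝ) ^ (-s)) ≤ Real.log c := by
  let fiber (p : ℕ) : Finset (Ideal (𝓞 K)) := (finite_setOf_isPrime_absNorm_eq K p).toFinset
  have mem_fiber {p : ℕ} {P : Ideal (𝓞 K)} : P ∈ fiber p ↔ P.IsPrime ∧ Ideal.absNorm P = p := by
    simp [fiber]
  have card_fiber (p : ℕ) : primeIdealCount K p = (fiber p).card :=
    Set.ncard_eq_toFinset_card _ (finite_setOf_isPrime_absNorm_eq K p)
  have disjoint : (A : Set ℕ).PairwiseDisjoint fiber := fun p _ q _ hpq ↦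
    Finset.disjoint_left.2 fun P hp hq ↦ hpq ((mem_fiber.1 hp).2.symm.trans (mem_fiber.1 hq).2)
  have prime_fiber : ∀ P ∈ A.biUnion fiber, Prime P := fun P hP ↦ by
    obtain ⟨p, hp, hPp⟩ := Finset.mem_biUnion.1 hP
    refine Ideal.prime_of_isPrime ?_ (mem_fiber.1 hPp).1
    rintro rfl
    exact hA p hp ((mem_fiber.1 hPp).2.symm.trans Ideal.absNorm_bot)
  have pos (n : ℕ) : 0 < 1 + (n : ℝ) ^ (-s) := by positivity
  calc ∑ p ∈ A, (primeIdealCount K p : ℝ) * Real.log (1 + (p : ℝ) ^ (-s))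
      = ∑ p ∈ A, ∑ P ∈ fiber p, Real.log (1 + (Ideal.absNorm P : ℝ) ^ (-s)) := by
        refine Finset.sum_congr rfl fun p _ ↦ ?_
        rw [card_fiber, ← nsmul_eq_mul]
        exact (Finset.sum_eq_card_nsmul fun P hP ↦ by rw [(mem_fiber.1 hP).2]).symm
    _ = ∑ P ∈ A.biUnion fiber, Real.log (1 + (Ideal.absNorm P : ℝ) ^ (-s)) :=
        (Finset.sum_biUnion disjoint).symm
    _ = Real.log (∏ P ∈ A.biUnion fiber, (1 + (Ideal.absNorm P : ℝ) ^ (-s))) :=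
        (Real.log_prod fun P _ ↦ (pos _).ne').symm
    _ ≤ Real.log c := Real.log_le_log (Finset.prod_pos fun P _ ↦ pos _)
        (prod_one_add_absNorm_rpow_le hc prime_fiber)

lemma tendsto_log_natCast_atTop : Tendsto (fun N : ℕ ↦ Real.log N) atTop atTop :=
  Real.tendsto_log_atTop.comp tendsto_natCast_atTop_atTop

lemma exists_sum_primeIdealCount_div_le (K : Type*) [Field K] [NumberField K] :
    ∃ C : ℝ, ∀ᶠ N : ℕ in atTop,
      ∑ p ∈ N.primesLE, (primeIdealCount K p : ℝ) / p ≤ Real.log (Real.log N) + C := by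
  obtain ⟨C, hC, hzeta⟩ := exists_sum_absNorm_rpow_neg_le K
  have tendsto_one : Tendsto (fun N : ℕ ↦ 1 + 1 / Real.log N) atTop (𝓝[>] 1) := by
    refine tendsto_nhdsWithin_iff.2 ⟨?_, ?_⟩
    · simpa using (tendsto_log_natCast_atTop.const_div_atTop 1).const_add 1
    · filter_upwards [tendsto_log_natCast_atTop.eventually_gt_atTop 0] with N hN
      exact lt_add_of_pos_right 1 (one_div_pos.2 hN)
  refine ⟨Real.log C + Module.finrank ℚ K * (∑' n : ℕ, 1 / (n : ℝ) ^ 2 + 1 + Real.log 4), ?_⟩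
  filter_upwards [tendsto_one.eventually hzeta, tendsto_log_natCast_atTop.eventually_ge_atTop 1]
    with N hN hlogN
  have log_le := sum_primeIdealCount_mul_log_le hN (A := N.primesLE)
    fun p hp ↦ (Nat.mem_primesLE.1 hp).2.ne_zero
  rw [add_sub_cancel_left, div_div_eq_mul_div, div_one,
    Real.log_mul hC.ne' (by linarith)] at log_le
  have := sum_primesLE_div_le (a := fun p ↦ (primeIdealCount K p : ℝ))
    (B := Module.finrank ℚ K) (fun p ↦ Nat.cast_nonneg _)
    (fun p hp ↦ by exact_mod_cast primeIdealCount_le_finrank K hp) hlogN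
  linarith

lemma exists_sum_rootCount_div_le {g : ℤ[X]} (hg : Irreducible (g.map (Int.castRingHom ℚ))) :
    ∃ C : ℝ, ∀ᶠ N : ℕ in atTop,
      ∑ p ∈ N.primesLE, (rootCount g p : ℝ) / p ≤ Real.log (Real.log N) + C := by
  obtain ⟨K, _, _, E, hE0, hE⟩ := exists_rootCount_le_primeIdealCount hg
  obtain ⟨C, hC⟩ := exists_sum_primeIdealCount_div_le K
  refine ⟨C + E.primeFactors.card, hC.mono fun N hN ↦ ?_⟩
  have pointwise : ∀ p ∈ N.primesLE, (rootCount g p : ℝ) / p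
      ≤ primeIdealCount K p / p + if p ∣ E then 1 else 0 := fun p hp ↦ by
    have hpp := (Nat.mem_primesLE.1 hp).2
    have : NeZero p := ⟨hpp.ne_zero⟩
    split_ifs with hpE
    · have : (rootCount g p : ℝ) / p ≤ 1 :=
        div_le_one_of_le₀ (by exact_mod_cast rootCount_le_self g p) p.cast_nonneg
      linarith [div_nonneg (primeIdealCount K p).cast_nonneg (p.cast_nonneg (α := ℝ))]
    · rw [add_zero]
      gcongr
      exact hE p hpp hpE
  have card_bad : ((N.primesLE.filter (· ∣ E)).card : ℝ) ≤ E.primeFactors.card := by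
    refine Nat.cast_le.2 (Finset.card_le_card fun p hp ↦ ?_)
    obtain ⟨hpN, hpE⟩ := Finset.mem_filter.1 hp
    exact Nat.mem_primeFactors.2 ⟨(Nat.mem_primesLE.1 hpN).2, hpE, hE0⟩
  refine (Finset.sum_le_sum pointwise).trans ?_
  rw [Finset.sum_add_distrib, Finset.sum_boole]
  linarith

end NumberField

section EulerProduct

lemma summable_mul_pow_of_le {a : ℕ → ℝ} {B x : ℝ} (ha : ∀ e, 0 ≤ a e) (hB : ∀ e, a e ≤ B)
    (hx₀ : 0 ≤ x) (hx₁ : x < 1) : Summable fun e ↦ a e * x ^ e :=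
  ((summable_geometric_of_lt_one hx₀ hx₁).mul_left B).of_nonneg_of_le
    (fun e ↦ mul_nonneg (ha e) (by positivity)) fun e ↦ by gcongr; exact hB e

lemma tsum_mul_pow_le_exp {a : ℕ → ℝ} {B x : ℝ} (ha : ∀ e, 0 ≤ a e) (ha₀ : a 0 = 1)
    (hB : ∀ e, a e ≤ B) (hx₀ : 0 ≤ x) (hx : x ≤ 2 / 3) :
    ∑' e, a e * x ^ e ≤ Real.exp (a 1 * x + 3 * B * x ^ 2) := by
  have hx₁ : x < 1 := by linarith
  have hB₀ : 0 ≤ B := (ha 0).trans (hB 0)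
  have hsum := summable_mul_pow_of_le ha hB hx₀ hx₁
  have hgeo := summable_geometric_of_lt_one hx₀ hx₁
  have hinv : (1 - x)⁻¹ ≤ 3 := by
    rw [inv_le_comm₀ (by linarith) (by norm_num)]
    linarith
  have htail : ∑' e, a (e + 2) * x ^ (e + 2) ≤ 3 * B * x ^ 2 :=
    calc ∑' e, a (e + 2) * x ^ (e + 2)
        ≤ ∑' e : ℕ, B * x ^ 2 * x ^ e := by
          refine ((summable_nat_add_iff 2).2 hsum).tsum_le_tsum (fun e ↦ ?_) (hgeo.mul_left _)
          rw [mul_assoc, ← pow_add, add_comm 2]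
          gcongr
          exact hB _
      _ = B * x ^ 2 * (1 - x)⁻¹ := by rw [tsum_mul_left, tsum_geometric_of_lt_one hx₀ hx₁]
      _ ≤ B * x ^ 2 * 3 := by gcongr
      _ = 3 * B * x ^ 2 := by ring
  calc ∑' e, a e * x ^ e
      = 1 + a 1 * x + ∑' e, a (e + 2) * x ^ (e + 2) := by
        rw [← hsum.sum_add_tsum_nat_add 2]
        simp [Finset.sum_range_succ, ha₀]
    _ ≤ a 1 * x + 3 * B * x ^ 2 + 1 := by linarith
    _ ≤ Real.exp (a 1 * x + 3 * B * x ^ 2) := Real.add_one_le_exp _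

lemma rpow_neg_three_div_four_le {x : ℝ} (hx : 2 ≤ x) : x ^ (-(3 / 4) : ℝ) ≤ 2 / 3 := by
  have hx₀ : 0 < x := by linarith
  refine le_of_pow_le_pow_left₀ four_ne_zero (by norm_num) ?_
  calc (x ^ (-(3 / 4) : ℝ)) ^ 4 = (x ^ 3)⁻¹ := by
        rw [← Real.rpow_natCast, ← Real.rpow_mul hx₀.le, ← Real.rpow_natCast,
          ← Real.rpow_neg hx₀.le]
        norm_num
    _ ≤ (2 ^ 3)⁻¹ := by gcongr
    _ ≤ (2 / 3) ^ 4 := by norm_num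

lemma natCast_pow_rpow (n e : ℕ) (s : ℝ) : ((n ^ e : ℕ) : ℝ) ^ s = ((n : ℝ) ^ s) ^ e := by
  rw [Nat.cast_pow, Real.rpow_pow_comm n.cast_nonneg]

lemma rpow_sub_one_le_rpow_neg_three_div_four {x η : ℝ} (hx : 1 ≤ x) (hη : η ≤ 1 / 4) :
    x ^ (η - 1) ≤ x ^ (-(3 / 4) : ℝ) :=
  Real.rpow_le_rpow_of_exponent_le hx (by linarith)

lemma rpow_sub_one_le_two_thirds {x η : ℝ} (hx : 2 ≤ x) (hη : η ≤ 1 / 4) :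
    x ^ (η - 1) ≤ 2 / 3 :=
  (rpow_sub_one_le_rpow_neg_three_div_four (by linarith) hη).trans (rpow_neg_three_div_four_le hx)

lemma sq_rpow_sub_one_le {x η : ℝ} (hx : 1 ≤ x) (hη : η ≤ 1 / 4) :
    (x ^ (η - 1)) ^ 2 ≤ x ^ (-(3 / 2) : ℝ) :=
  calc (x ^ (η - 1)) ^ 2 ≤ (x ^ (-(3 / 4) : ℝ)) ^ 2 :=
        pow_le_pow_left₀ (by positivity) (rpow_sub_one_le_rpow_neg_three_div_four hx hη) 2
    _ = x ^ (-(3 / 2) : ℝ) := by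
        rw [← Real.rpow_natCast, ← Real.rpow_mul (by linarith)]
        norm_num

lemma exp_le_one_add_mul_exp {u c : ℝ} (hu : 0 ≤ u) (hc : u ≤ c) :
    Real.exp u ≤ 1 + u * Real.exp c := by
  have hneg : (1 - u) * Real.exp u ≤ 1 := by
    simpa [← Real.exp_add] using
      mul_le_mul_of_nonneg_right (Real.one_sub_le_exp_neg u) (Real.exp_pos u).le
  have hmono : u * Real.exp u ≤ u * Real.exp c := by gcongr
  linarith

/-- A nonnegative multiplicative function whose values at the prime powers are bounded by `B`;
the counting function of the roots of a polynomial modulo `d` is the example of interest. The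
exponent `0` is included in `map_prime_pow_le`, so that `1 ≤ B`. -/
structure IsPrimePowBounded (ρ : ℕ → ℝ) (B : ℝ) : Prop where
  nonneg : ∀ n, 0 ≤ ρ n
  map_one : ρ 1 = 1
  map_mul_of_coprime : ∀ {m n : ℕ}, m.Coprime n → ρ (m * n) = ρ m * ρ n
  map_prime_pow_le : ∀ {p : ℕ} (e : ℕ), p.Prime → ρ (p ^ e) ≤ B

namespace IsPrimePowBounded

variable {ρ : ℕ → ℝ} {B η : ℝ}

lemma bound_nonneg (h : IsPrimePowBounded ρ B) : 0 ≤ B :=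
  (h.nonneg _).trans (h.map_prime_pow_le 0 Nat.prime_two)

lemma map_prime_le (h : IsPrimePowBounded ρ B) {p : ℕ} (hp : p.Prime) : ρ p ≤ B := by
  simpa only [pow_one] using h.map_prime_pow_le 1 hp

lemma summable_prime_pow (h : IsPrimePowBounded ρ B) {p : ℕ} (hp : p.Prime) (hη : η ≤ 1 / 4) :
    Summable fun e ↦ ρ (p ^ e) * ((p ^ e : ℕ) : ℝ) ^ (η - 1) := by
  simp only [natCast_pow_rpow]
  exact summable_mul_pow_of_le (fun e ↦ h.nonneg _) (fun e ↦ h.map_prime_pow_le e hp)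
    (by positivity)
    ((rpow_sub_one_le_two_thirds (by exact_mod_cast hp.two_le) hη).trans_lt (by norm_num))

lemma tsum_prime_pow_le (h : IsPrimePowBounded ρ B) {p : ℕ} (hp : p.Prime) (hη : η ≤ 1 / 4) :
    ∑' e, ρ (p ^ e) * ((p ^ e : ℕ) : ℝ) ^ (η - 1) ≤
      Real.exp (ρ p * (p : ℝ) ^ (η - 1) + 3 * B * (p : ℝ) ^ (-(3 / 2) : ℝ)) := by
  have hB := h.bound_nonneg
  simp only [natCast_pow_rpow]
  refine (tsum_mul_pow_le_exp (fun e ↦ h.nonneg _) (by simpa using h.map_one)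
    (fun e ↦ h.map_prime_pow_le e hp) (by positivity)
    (rpow_sub_one_le_two_thirds (by exact_mod_cast hp.two_le) hη)).trans ?_
  rw [pow_one]
  gcongr
  exact sq_rpow_sub_one_le (by exact_mod_cast hp.one_lt.le) hη

lemma sum_smoothNumbers_le_exp (h : IsPrimePowBounded ρ B) (hη : η ≤ 1 / 4) {M : ℕ}
    {F : Finset ℕ} (hF : (F : Set ℕ) ⊆ Nat.smoothNumbers (M + 1)) :
    ∑ d ∈ F, ρ d * (d : ℝ) ^ (η - 1) ≤
      Real.exp (∑ p ∈ M.primesLE,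
        (ρ p * (p : ℝ) ^ (η - 1) + 3 * B * (p : ℝ) ^ (-(3 / 2) : ℝ))) := by
  set f : ℕ → ℝ := fun d ↦ ρ d * (d : ℝ) ^ (η - 1)
  have hf₀ (d : ℕ) : 0 ≤ f d := mul_nonneg (h.nonneg d) (by positivity)
  have hf₁ : f 1 = 1 := by simp [f, h.map_one]
  have hmul {m n : ℕ} (hmn : m.Coprime n) : f (m * n) = f m * f n := by
    simp only [f, h.map_mul_of_coprime hmn, Nat.cast_mul,
      Real.mul_rpow m.cast_nonneg n.cast_nonneg]
    ring
  have hprod : HasSum (fun m : Nat.smoothNumbers (M + 1) ↦ f m)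
      (∏ p ∈ M.primesLE, ∑' e, f (p ^ e)) :=
    (EulerProduct.summable_and_hasSum_smoothNumbers_prod_primesBelow_tsum hf₁ hmul
      (fun hp ↦ (h.summable_prime_pow hp hη).norm) (M + 1)).2
  calc ∑ d ∈ F, f d
      = ∑ d ∈ F.subtype (· ∈ Nat.smoothNumbers (M + 1)), f d :=
        (Finset.sum_subtype_of_mem f fun d hd ↦ hF hd).symm
    _ ≤ ∏ p ∈ M.primesLE, ∑' e, f (p ^ e) := sum_le_hasSum _ (fun d _ ↦ hf₀ d) hprod
    _ ≤ _ := by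
        rw [Real.exp_sum]
        exact Finset.prod_le_prod (fun p _ ↦ tsum_nonneg fun e ↦ hf₀ _)
          fun p hp ↦ h.tsum_prime_pow_le (Nat.mem_primesLE.1 hp).2 hη

lemma map_prime_mul_rpow_le (h : IsPrimePowBounded ρ B) {p : ℕ} (hp : p.Prime) {c : ℝ}
    (hη : 0 ≤ η) (hc : η * Real.log p ≤ c) :
    ρ p * (p : ℝ) ^ (η - 1) ≤ ρ p / p + B * Real.exp c * η * (Real.log p / p) := by
  have hp₀ : (0 : ℝ) < p := by exact_mod_cast hp.pos
  have hlog : 0 ≤ η * Real.log p := mul_nonneg hη (Real.log_natCast_nonneg p)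
  have hρ := h.nonneg p
  calc ρ p * (p : ℝ) ^ (η - 1)
      = ρ p * (Real.exp (η * Real.log p) / p) := by
        rw [Real.rpow_sub_one hp₀.ne', Real.rpow_def_of_pos hp₀, mul_comm η]
    _ ≤ ρ p * ((1 + η * Real.log p * Real.exp c) / p) := by
        gcongr
        exact exp_le_one_add_mul_exp hlog hc
    _ = ρ p / p + ρ p * (η * Real.log p * Real.exp c / p) := by ring
    _ ≤ ρ p / p + B * (η * Real.log p * Real.exp c / p) := by
        gcongr
        exact h.map_prime_le hp
    _ = _ := by ring

lemma sum_primesLE_rpow_le (h : IsPrimePowBounded ρ B) {M : ℕ} {c : ℝ} (hη₀ : 0 ≤ η)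
    (hη₁ : η ≤ 1) (hc : η * Real.log M ≤ c) :
    ∑ p ∈ M.primesLE, ρ p * (p : ℝ) ^ (η - 1) ≤
      ∑ p ∈ M.primesLE, ρ p / p + B * Real.exp c * (c + Real.log 4) := by
  have hB := h.bound_nonneg
  have hlog : 0 ≤ Real.log 4 := Real.log_nonneg (by norm_num)
  calc ∑ p ∈ M.primesLE, ρ p * (p : ℝ) ^ (η - 1)
      ≤ ∑ p ∈ M.primesLE, (ρ p / p + B * Real.exp c * η * (Real.log p / p)) := by
        refine Finset.sum_le_sum fun p hp ↦ ?_
        obtain ⟨hpM, hp⟩ := Nat.mem_primesLE.1 hp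
        have hp₀ : (0 : ℝ) < p := by exact_mod_cast hp.pos
        refine h.map_prime_mul_rpow_le hp hη₀ (le_trans ?_ hc)
        gcongr
    _ = ∑ p ∈ M.primesLE, ρ p / p +
          B * Real.exp c * (η * ∑ p ∈ M.primesLE, Real.log p / p) := by
        rw [Finset.sum_add_distrib, ← Finset.mul_sum]
        ring
    _ ≤ ∑ p ∈ M.primesLE, ρ p / p + B * Real.exp c * (η * (Real.log M + Real.log 4)) := by
        gcongr
        exact sum_primesLE_log_div_le M
    _ ≤ _ := by
        gcongr
        nlinarith

lemma exists_sum_smoothNumbers_le (h : IsPrimePowBounded ρ B) {C : ℝ}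
    (hC : ∀ᶠ M : ℕ in atTop, ∑ p ∈ M.primesLE, ρ p / p ≤ Real.log (Real.log M) + C) (c : ℝ) :
    ∃ K > 0, ∀ᶠ M : ℕ in atTop, ∀ η, 0 ≤ η → η ≤ 1 / 4 → η * Real.log M ≤ c →
      ∀ F : Finset ℕ, (F : Set ℕ) ⊆ Nat.smoothNumbers (M + 1) →
        ∑ d ∈ F, ρ d * (d : ℝ) ^ (η - 1) ≤ K * Real.log M := by
  have hB := h.bound_nonneg
  set S := ∑' n : ℕ, (n : ℝ) ^ (-(3 / 2) : ℝ)
  have hS (M : ℕ) : ∑ p ∈ M.primesLE, (p : ℝ) ^ (-(3 / 2) : ℝ) ≤ S :=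
    (Real.summable_nat_rpow.2 (by norm_num)).sum_le_tsum _ fun _ _ ↦ by positivity
  refine ⟨Real.exp (C + B * Real.exp c * (c + Real.log 4) + 3 * B * S), Real.exp_pos _, ?_⟩
  filter_upwards [hC, tendsto_log_natCast_atTop.eventually_gt_atTop 0]
    with M hM hlog η hη₀ hη hc F hF
  refine (h.sum_smoothNumbers_le_exp hη hF).trans ?_
  calc _ ≤ Real.exp (C + B * Real.exp c * (c + Real.log 4) + 3 * B * S +
          Real.log (Real.log M)) := by
        rw [Finset.sum_add_distrib, ← Finset.mul_sum, Real.exp_le_exp]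
        have hprimes := h.sum_primesLE_rpow_le hη₀ (by linarith) hc
        have hpowers := mul_le_mul_of_nonneg_left (hS M) (by positivity : 0 ≤ 3 * B)
        linarith
    _ = _ := by rw [Real.exp_add, Real.exp_log hlog]

end IsPrimePowBounded

end EulerProduct

section Divisors

open ArithmeticFunction Finset

lemma card_divisors_mul_le (a b : ℕ) : #(a * b).divisors ≤ #a.divisors * #b.divisors := by
  rw [Nat.divisors_mul]
  exact card_mul_le

lemma card_divisors_le_two_pow_cardFactors (n : ℕ) : #n.divisors ≤ 2 ^ cardFactors n := by
  rcases eq_or_ne n 0 with rfl | hn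
  · simp
  rw [Nat.card_divisors hn, cardFactors_eq_sum_factorization, Finsupp.sum, ← prod_pow_eq_pow_sum]
  exact prod_le_prod' fun p _ ↦ Nat.lt_two_pow_self

lemma minFac_pow_cardFactors_le {n : ℕ} (hn : n ≠ 0) : n.minFac ^ cardFactors n ≤ n := by
  conv_rhs => rw [← Nat.prod_primeFactorsList hn]
  refine List.pow_card_le_prod _ _ fun p hp ↦ ?_
  obtain ⟨hp, hpn⟩ := (Nat.mem_primeFactorsList hn).1 hp
  exact Nat.minFac_le_of_dvd hp.two_le hpn

lemma card_divisors_le_two_pow_log_minFac {b N A : ℕ} (hb : 1 < b) (hbN : b ≤ N ^ A) :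
    #b.divisors ≤ 2 ^ (A * (Nat.log b.minFac N + 1)) := by
  have hq : 1 < b.minFac := (Nat.minFac_prime hb.ne').one_lt
  have hpow : b.minFac ^ cardFactors b ≤ b.minFac ^ (A * (Nat.log b.minFac N + 1)) :=
    calc b.minFac ^ cardFactors b ≤ b := minFac_pow_cardFactors_le (by omega)
      _ ≤ N ^ A := hbN
      _ ≤ (b.minFac ^ (Nat.log b.minFac N + 1)) ^ A := by
          gcongr
          exact (Nat.lt_pow_succ_log_self hq N).le
      _ = _ := by rw [← pow_mul, mul_comm]
  refine (card_divisors_le_two_pow_cardFactors b).trans (Nat.pow_le_pow_right two_pos ?_)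
  exact (Nat.pow_le_pow_iff_right hq).1 hpow

-- `d ↦ a / d` exchanges the divisors below and above `√a`.
lemma card_divisors_le_two_mul_card_filter (a : ℕ) :
    #a.divisors ≤ 2 * #{d ∈ a.divisors | a ≤ d ^ 2} := by
  have hsplit := card_filter_add_card_filter_not (s := a.divisors) (fun d ↦ a ≤ d ^ 2)
  have hinj : #{d ∈ a.divisors | ¬ a ≤ d ^ 2} ≤ #{d ∈ a.divisors | a ≤ d ^ 2} := by
    refine card_le_card_of_injOn (a / ·) (fun d hd ↦ ?_) fun d hd e he hde ↦ ?_
    · obtain ⟨hd, hda⟩ := mem_filter.1 hd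
      obtain ⟨⟨c, rfl⟩, ha⟩ := Nat.mem_divisors.1 hd
      have hdc : d < c := by
        by_contra! hcd
        exact hda (by nlinarith)
      have hd₀ : 0 < d := Nat.pos_of_ne_zero (left_ne_zero_of_mul ha)
      refine mem_filter.2 ⟨Nat.mem_divisors.2 ?_, ?_⟩ <;>
        simp only [Nat.mul_div_cancel_left c hd₀]
      · exact ⟨dvd_mul_left c d, ha⟩
      · nlinarith
    · obtain ⟨hda, ha⟩ := Nat.mem_divisors.1 (mem_filter.1 hd).1
      have hea := Nat.dvd_of_mem_divisors (mem_filter.1 he).1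
      simpa only [hde, Nat.div_div_self hea ha] using (Nat.div_div_self hda ha).symm
  omega

lemma add_one_le_mul_pow {x y : ℝ} (hy : 1 < y) (hyx : y ≤ x) (e : ℕ) :
    (e : ℝ) + 1 ≤ y / (y - 1) * x ^ e := by
  have hy₀ : 0 < y - 1 := by linarith
  have hbern : 1 + e * (y - 1) ≤ x ^ e :=
    (one_add_mul_sub_le_pow (by linarith) e).trans (by gcongr)
  calc (e : ℝ) + 1 ≤ y / (y - 1) * (1 + e * (y - 1)) := by
        field_simp
        nlinarith [mul_nonneg (e.cast_nonneg (α := ℝ)) (sq_nonneg (y - 1))]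
    _ ≤ y / (y - 1) * x ^ e := by gcongr

lemma natCast_rpow_eq_prod_primeFactors {m : ℕ} (hm : m ≠ 0) (ε : ℝ) :
    (m : ℝ) ^ ε = ∏ p ∈ m.primeFactors, ((p : ℝ) ^ ε) ^ m.factorization p := by
  conv_lhs => rw [← Nat.prod_factorization_pow_eq_self hm]
  rw [Finsupp.prod, Nat.support_factorization, Nat.cast_prod,
    ← Real.finsetProd_rpow _ _ fun _ _ ↦ Nat.cast_nonneg _]
  exact prod_congr rfl fun p _ ↦ natCast_pow_rpow p _ ε

lemma exists_card_divisors_le {ε : ℝ} (hε : 0 < ε) :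
    ∃ C > 0, ∀ m : ℕ, m ≠ 0 → (#m.divisors : ℝ) ≤ C * (m : ℝ) ^ ε := by
  have hy : (1 : ℝ) < 2 ^ ε := Real.one_lt_rpow one_lt_two hε
  set c : ℝ := 2 ^ ε / (2 ^ ε - 1)
  have hc : 1 ≤ c := by
    rw [one_le_div (by linarith)]
    linarith
  obtain ⟨Q, hQ⟩ := exists_nat_ge ((2 : ℝ) ^ ε⁻¹)
  have hlarge {p : ℕ} (hp : Q ≤ p) : (2 : ℝ) ≤ (p : ℝ) ^ ε :=
    (Real.rpow_inv_le_iff_of_pos zero_le_two p.cast_nonneg hε).1 (hQ.trans (by exact_mod_cast hp))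
  have hfactor {p : ℕ} (hp : p.Prime) (e : ℕ) :
      (e : ℝ) + 1 ≤ (if p < Q then c else 1) * ((p : ℝ) ^ ε) ^ e := by
    split_ifs with hpQ
    · refine add_one_le_mul_pow hy ?_ e
      gcongr
      exact_mod_cast hp.two_le
    · calc (e : ℝ) + 1 ≤ 2 ^ e := by exact_mod_cast Nat.lt_two_pow_self
        _ ≤ 1 * ((p : ℝ) ^ ε) ^ e := by
          rw [one_mul]
          gcongr
          exact hlarge (not_lt.1 hpQ)
  refine ⟨c ^ Q, by positivity, fun m hm ↦ ?_⟩
  calc (#m.divisors : ℝ) = ∏ p ∈ m.primeFactors, ((m.factorization p : ℝ) + 1) := by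
        rw [Nat.card_divisors hm]
        push_cast
        rfl
    _ ≤ ∏ p ∈ m.primeFactors, (if p < Q then c else 1) * ((p : ℝ) ^ ε) ^ m.factorization p :=
        prod_le_prod (fun _ _ ↦ by positivity) fun p hp ↦
          hfactor (Nat.prime_of_mem_primeFactors hp) _
    _ = c ^ #{p ∈ m.primeFactors | p < Q} * (m : ℝ) ^ ε := by
        rw [prod_mul_distrib, natCast_rpow_eq_prod_primeFactors hm, ← prod_filter, prod_const]
    _ ≤ c ^ Q * (m : ℝ) ^ ε := by
        gcongr
        refine (card_le_card (t := range Q) fun p hp ↦ ?_).trans_eq (card_range Q)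
        exact mem_range.2 (mem_filter.1 hp).2

end Divisors

section Decomposition

open Finset

lemma exists_smooth_mul_eq_of_lt {m N : ℕ} (hN : N ≠ 0) (hm : N < m) :
    ∃ a b : ℕ, a * b = m ∧ a ≤ N ∧ N < a * b.minFac ∧ a ∈ Nat.smoothNumbers (b.minFac + 1) := by
  suffices h : ∀ b a : ℕ, a * b = m → a ≤ N → a ∈ Nat.smoothNumbers (b.minFac + 1) →
      ∃ a b : ℕ, a * b = m ∧ a ≤ N ∧ N < a * b.minFac ∧ a ∈ Nat.smoothNumbers (b.minFac + 1) from
    h m 1 (one_mul m) (Nat.one_le_iff_ne_zero.2 hN)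
      (Nat.mem_smoothNumbers_of_lt one_pos (by have := m.minFac_pos; omega))
  intro b
  induction b using Nat.strong_induction_on with
  | _ b ih =>
    intro a hab ha hsmooth
    by_cases hlt : N < a * b.minFac
    · exact ⟨a, b, hab, ha, hlt, hsmooth⟩
    have hb : b ≠ 1 := by rintro rfl; omega
    have hq : b.minFac.Prime := Nat.minFac_prime hb
    obtain ⟨c, hc⟩ := b.minFac_dvd
    have hac : a * b.minFac * c = m := by rw [mul_assoc, ← hc, hab]
    have hc₁ : c ≠ 1 := by rintro rfl; omega
    have hb₀ : 0 < b := Nat.pos_of_ne_zero (by rintro rfl; omega)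
    have hqc : b.minFac ≤ c.minFac :=
      Nat.minFac_le_of_dvd (Nat.minFac_prime hc₁).two_le
        (c.minFac_dvd.trans (Dvd.intro_left _ hc.symm))
    refine ih c ?_ (a * b.minFac) hac (not_lt.1 hlt) (Nat.mul_mem_smoothNumbers ?_ ?_)
    · have := hq.two_le
      nlinarith
    · exact Nat.smoothNumbers_mono (by omega) hsmooth
    · exact Nat.mem_smoothNumbers_of_lt hq.pos (by omega)

/-- The `y`-smooth integers in `(N ^ (1 / 4), N]`. Rankin's method makes their contribution to
sums `∑ ρ d / d` exponentially small in `log N / log y`. -/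
def largeSmooth (N y : ℕ) : Finset ℕ :=
  {d ∈ Icc 1 N | N < d ^ 4 ∧ d ∈ Nat.smoothNumbers (y + 1)}

lemma largeSmooth_subset_Icc (N y : ℕ) : largeSmooth N y ⊆ Icc 1 N :=
  filter_subset _ _

lemma lt_pow_four_of_mem_largeSmooth {N y d : ℕ} (hd : d ∈ largeSmooth N y) : N < d ^ 4 :=
  (mem_filter.1 hd).2.1

lemma coe_largeSmooth_subset_smoothNumbers (N y : ℕ) :
    (largeSmooth N y : Set ℕ) ⊆ Nat.smoothNumbers (y + 1) :=
  fun _ hd ↦ (mem_filter.1 hd).2.2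

lemma mem_largeSmooth_of_dvd {a d N y : ℕ} (haN : a ≤ N) (hNa : N < a ^ 2)
    (ha : a ∈ Nat.smoothNumbers (y + 1)) (hda : d ∣ a) (had : a ≤ d ^ 2) :
    d ∈ largeSmooth N y := by
  have hd : d ∈ Nat.smoothNumbers (y + 1) := Nat.mem_smoothNumbers_of_dvd ha hda
  have hd₀ := Nat.ne_zero_of_mem_smoothNumbers hd
  have hdN : d ≤ N :=
    (Nat.le_of_dvd (Nat.pos_of_ne_zero (Nat.ne_zero_of_mem_smoothNumbers ha)) hda).trans haN
  refine mem_filter.2 ⟨mem_Icc.2 ⟨Nat.one_le_iff_ne_zero.2 hd₀, hdN⟩, ?_, hd⟩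
  calc N < a ^ 2 := hNa
    _ ≤ (d ^ 2) ^ 2 := Nat.pow_le_pow_left had 2
    _ = d ^ 4 := by ring

lemma card_divisors_le_card_filter_Icc {a m N : ℕ} (haN : a ≤ N) (ham : a ∣ m) :
    #a.divisors ≤ #{d ∈ Icc 1 N | d ∣ m} := by
  refine card_le_card fun d hd ↦ ?_
  have hda := Nat.dvd_of_mem_divisors hd
  exact mem_filter.2 ⟨mem_Icc.2 ⟨Nat.pos_of_mem_divisors hd, (Nat.divisor_le hd).trans haN⟩,
    hda.trans ham⟩

lemma card_divisors_le_card_filter_largeSmooth {a m N y : ℕ} (haN : a ≤ N) (hNa : N < a ^ 2)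
    (ha : a ∈ Nat.smoothNumbers (y + 1)) (ham : a ∣ m) :
    #a.divisors ≤ 2 * #{d ∈ largeSmooth N y | d ∣ m} := by
  refine (card_divisors_le_two_mul_card_filter a).trans (Nat.mul_le_mul_left 2 ?_)
  refine card_le_card fun d hd ↦ ?_
  obtain ⟨hda, had⟩ := mem_filter.1 hd
  have hda := Nat.dvd_of_mem_divisors hda
  exact mem_filter.2 ⟨mem_largeSmooth_of_dvd haN hNa ha hda had, hda.trans ham⟩

lemma lt_sq_of_lt_mul_of_sq_le {a q N : ℕ} (ha : N < a * q) (hq : q ^ 2 ≤ N) : N < a ^ 2 := by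
  have hq₀ : 0 < q := Nat.pos_of_ne_zero (by rintro rfl; omega)
  have hqa : q < a := by nlinarith
  nlinarith

lemma card_divisors_le_or_exists_or_nonempty {m N A Y : ℕ} (hN : N ≠ 0) (hm : m ≠ 0)
    (hmN : m ≤ N ^ A) (hY : 1 < Y) :
    #m.divisors ≤ 4 ^ A * #{d ∈ Icc 1 N | d ∣ m} ∨
      (∃ s ∈ Icc 2 (Nat.log Y N), #m.divisors ≤
        2 ^ (A * (s + 1) + 1) * #{d ∈ largeSmooth N (Nat.nthRoot s N) | d ∣ m}) ∨
      {d ∈ largeSmooth N Y | d ∣ m}.Nonempty := by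
  rcases le_or_gt m N with hle | hlt
  · exact .inl ((card_divisors_le_card_filter_Icc hle dvd_rfl).trans
      (Nat.le_mul_of_pos_left _ (by positivity)))
  obtain ⟨a, b, rfl, haN, hNaq, ha⟩ := exists_smooth_mul_eq_of_lt hN hlt
  set q := b.minFac
  set s := Nat.log q N
  have hab : a ∣ a * b := dvd_mul_right a b
  have hb : 1 < b := by
    by_contra! hb
    nlinarith
  have hbN : b ≤ N ^ A :=
    (Nat.le_mul_of_pos_left b (Nat.pos_of_ne_zero (left_ne_zero_of_mul hm))).trans hmN
  have hdiv : #(a * b).divisors ≤ #a.divisors * 2 ^ (A * (s + 1)) :=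
    (card_divisors_mul_le a b).trans
      (Nat.mul_le_mul_left _ (card_divisors_le_two_pow_log_minFac hb hbN))
  rcases lt_or_ge s 2 with hs | hs
  · have hpow : 2 ^ (A * (s + 1)) ≤ 4 ^ A := by
      rw [show 4 = 2 ^ 2 by norm_num, ← pow_mul, mul_comm 2 A]
      exact Nat.pow_le_pow_right two_pos (Nat.mul_le_mul_left _ (by omega))
    rw [mul_comm (4 ^ A)]
    exact .inl (hdiv.trans (Nat.mul_le_mul (card_divisors_le_card_filter_Icc haN hab) hpow))
  have hNa : N < a ^ 2 := lt_sq_of_lt_mul_of_sq_le hNaq (Nat.pow_le_of_le_log hN hs)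
  rcases le_or_gt Y q with hYq | hqY
  · have hsN : q ^ s ≤ N := Nat.pow_log_le_self q hN
    have hroot : q ≤ Nat.nthRoot s N := (Nat.le_nthRoot_iff (by omega)).2 hsN
    refine .inr (.inl ⟨s, mem_Icc.2 ⟨hs, ?_⟩, hdiv.trans ?_⟩)
    · exact Nat.le_log_of_pow_le hY ((Nat.pow_le_pow_left hYq s).trans hsN)
    · rw [pow_succ, mul_comm, mul_assoc]
      exact Nat.mul_le_mul_left _ (card_divisors_le_card_filter_largeSmooth haN hNa
        (Nat.smoothNumbers_mono (by omega) ha) hab)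
  · have haY : a ∈ Nat.smoothNumbers (Y + 1) := Nat.smoothNumbers_mono (by omega) ha
    exact .inr (.inr ⟨a, mem_filter.2
      ⟨mem_largeSmooth_of_dvd haN hNa haY dvd_rfl (Nat.le_self_pow two_ne_zero a), hab⟩⟩)

lemma card_divisors_le_add_sum_add {m N A Y : ℕ} (hN : N ≠ 0) (hm : m ≠ 0) (hmN : m ≤ N ^ A)
    (hY : 1 < Y) :
    #m.divisors ≤ 4 ^ A * #{d ∈ Icc 1 N | d ∣ m} +
      ∑ s ∈ Icc 2 (Nat.log Y N),
        2 ^ (A * (s + 1) + 1) * #{d ∈ largeSmooth N (Nat.nthRoot s N) | d ∣ m} +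
      #m.divisors * #{d ∈ largeSmooth N Y | d ∣ m} := by
  rcases card_divisors_le_or_exists_or_nonempty hN hm hmN hY with h | ⟨s, hs, h⟩ | h
  · exact le_add_right (le_add_right h)
  · exact le_add_right (le_add_left (h.trans (single_le_sum (f := fun s ↦ 2 ^ (A * (s + 1) + 1) *
      #{d ∈ largeSmooth N (Nat.nthRoot s N) | d ∣ m}) (fun _ _ ↦ Nat.zero_le _) hs)))
  · exact le_add_left (Nat.le_mul_of_pos_right _ (card_pos.2 h))

end Decomposition

section Rankin

lemma sum_div_le_rpow_neg_mul_sum {ρ : ℕ → ℝ} (hρ : ∀ d, 0 ≤ ρ d) {N : ℕ} (hN : N ≠ 0) {η : ℝ}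
    (hη : 0 ≤ η) {F : Finset ℕ} (hF : ∀ d ∈ F, N < d ^ 4) :
    ∑ d ∈ F, ρ d / d ≤ (N : ℝ) ^ (-(η / 4)) * ∑ d ∈ F, ρ d * (d : ℝ) ^ (η - 1) := by
  rw [Finset.mul_sum]
  refine Finset.sum_le_sum fun d hd ↦ ?_
  have hd₀ : (0 : ℝ) < d := by
    have : d ≠ 0 := by
      rintro rfl
      simpa using hF 0 hd
    positivity
  have hle : (d : ℝ) ^ (-η) ≤ (N : ℝ) ^ (-(η / 4)) :=
    calc (d : ℝ) ^ (-η) = ((d : ℝ) ^ 4) ^ (-(η / 4)) := by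
          rw [← Real.rpow_natCast, ← Real.rpow_mul hd₀.le]
          congr 1
          push_cast
          ring
      _ ≤ (N : ℝ) ^ (-(η / 4)) :=
          Real.rpow_le_rpow_of_nonpos (by positivity) (by exact_mod_cast (hF d hd).le)
            (by linarith)
  have hρd := hρ d
  calc ρ d / d = (d : ℝ) ^ (-η) * (ρ d * (d : ℝ) ^ (η - 1)) := by
        rw [mul_left_comm, ← Real.rpow_add hd₀, show -η + (η - 1) = -1 by ring,
          Real.rpow_neg_one, div_eq_mul_inv]
    _ ≤ (N : ℝ) ^ (-(η / 4)) * (ρ d * (d : ℝ) ^ (η - 1)) := by gcongr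

lemma mul_log_le_log_of_pow_le {n s N : ℕ} (hn : n ≠ 0) (h : n ^ s ≤ N) :
    s * Real.log n ≤ Real.log N := by
  rw [← Real.log_pow]
  exact Real.log_le_log (by positivity) (by exact_mod_cast h)

namespace IsPrimePowBounded

variable {ρ : ℕ → ℝ} {B C : ℝ}

lemma exists_sum_Icc_div_le (h : IsPrimePowBounded ρ B)
    (hC : ∀ᶠ M : ℕ in atTop, ∑ p ∈ M.primesLE, ρ p / p ≤ Real.log (Real.log M) + C) :
    ∃ K : ℝ, ∀ᶠ N : ℕ in atTop, ∑ d ∈ Finset.Icc 1 N, ρ d / d ≤ K * Real.log N := by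
  obtain ⟨K, -, hev⟩ := h.exists_sum_smoothNumbers_le hC 0
  refine ⟨K, hev.mono fun N hN ↦ ?_⟩
  have hsmooth : (Finset.Icc 1 N : Set ℕ) ⊆ Nat.smoothNumbers (N + 1) := fun d hd ↦ by
    obtain ⟨hd₁, hdN⟩ := Finset.mem_Icc.1 hd
    exact Nat.mem_smoothNumbers_of_lt hd₁ (by omega)
  simpa only [zero_sub, Real.rpow_neg_one, ← div_eq_mul_inv] using
    hN 0 le_rfl (by norm_num) (by rw [zero_mul]) (Finset.Icc 1 N) hsmooth

lemma exists_sum_largeSmooth_nthRoot_div_le (h : IsPrimePowBounded ρ B)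
    (hC : ∀ᶠ M : ℕ in atTop, ∑ p ∈ M.primesLE, ρ p / p ≤ Real.log (Real.log M) + C)
    {a : ℝ} (ha : 0 ≤ a) :
    ∃ K > 0, ∀ᶠ Y : ℕ in atTop, ∀ N s : ℕ, s ≠ 0 → Y ^ s ≤ N →
      ∑ d ∈ largeSmooth N (Nat.nthRoot s N), ρ d / d ≤
        Real.exp (-(a * s)) * (K * Real.log N) := by
  obtain ⟨K, hK, hev⟩ := h.exists_sum_smoothNumbers_le hC (4 * a)
  refine ⟨K, hK, ?_⟩
  filter_upwards [eventually_forall_ge_atTop.2 hev, eventually_gt_atTop 1,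
    tendsto_log_natCast_atTop.eventually_ge_atTop (16 * a)] with Y hY hY₁ hlogY N s hs hYN
  set M := Nat.nthRoot s N
  have hMN : M ^ s ≤ N := Nat.pow_nthRoot_le_iff.2 (.inl hs)
  have hYM : Y ≤ M := (Nat.le_nthRoot_iff hs).2 hYN
  have hM₀ : M ≠ 0 := by omega
  have hMN' : M ≤ N := (Nat.le_self_pow hs M).trans hMN
  have hN₀ : (0 : ℝ) < N := by
    have : N ≠ 0 := by omega
    positivity
  have hlogN : 0 < Real.log N := Real.log_pos (by exact_mod_cast (by omega : 1 < N))
  set η : ℝ := 4 * a * s / Real.log N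
  have hη₀ : 0 ≤ η := by positivity
  have hη : η ≤ 1 / 4 := by
    rw [div_le_iff₀ hlogN]
    nlinarith [mul_log_le_log_of_pow_le (by omega) hYN]
  have hηM : η * Real.log M ≤ 4 * a := by
    rw [div_mul_eq_mul_div, div_le_iff₀ hlogN, mul_assoc]
    gcongr
    exact mul_log_le_log_of_pow_le hM₀ hMN
  calc ∑ d ∈ largeSmooth N M, ρ d / d
      ≤ (N : ℝ) ^ (-(η / 4)) * ∑ d ∈ largeSmooth N M, ρ d * (d : ℝ) ^ (η - 1) :=
        sum_div_le_rpow_neg_mul_sum h.nonneg (by omega) hη₀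
          fun _ hd ↦ lt_pow_four_of_mem_largeSmooth hd
    _ ≤ (N : ℝ) ^ (-(η / 4)) * (K * Real.log M) := by
        gcongr
        exact hY M hYM η hη₀ hη hηM _ (coe_largeSmooth_subset_smoothNumbers N M)
    _ = Real.exp (-(a * s)) * (K * Real.log M) := by
        rw [Real.rpow_def_of_pos hN₀]
        congr 2
        simp only [η]
        field_simp
    _ ≤ Real.exp (-(a * s)) * (K * Real.log N) := by gcongr

lemma exists_rpow_mul_sum_largeSmooth_div_le (h : IsPrimePowBounded ρ B) (Y : ℕ) :
    ∃ K > 0, ∀ N : ℕ, N ≠ 0 →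
      (N : ℝ) ^ (1 / 16 : ℝ) * ∑ d ∈ largeSmooth N Y, ρ d / d ≤ K := by
  refine ⟨Real.exp (∑ p ∈ Y.primesLE,
    (ρ p * (p : ℝ) ^ ((1 / 4 : ℝ) - 1) + 3 * B * (p : ℝ) ^ (-(3 / 2) : ℝ))), Real.exp_pos _,
    fun N hN ↦ ?_⟩
  have hrankin : ∑ d ∈ largeSmooth N Y, ρ d / d ≤
      (N : ℝ) ^ (-((1 / 4) / 4) : ℝ) *
        ∑ d ∈ largeSmooth N Y, ρ d * (d : ℝ) ^ ((1 / 4 : ℝ) - 1) :=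
    sum_div_le_rpow_neg_mul_sum h.nonneg hN (by norm_num)
      fun _ hd ↦ lt_pow_four_of_mem_largeSmooth hd
  calc (N : ℝ) ^ (1 / 16 : ℝ) * ∑ d ∈ largeSmooth N Y, ρ d / d
      ≤ (N : ℝ) ^ (1 / 16 : ℝ) * ((N : ℝ) ^ (-((1 / 4) / 4) : ℝ) *
          ∑ d ∈ largeSmooth N Y, ρ d * (d : ℝ) ^ ((1 / 4 : ℝ) - 1)) := by gcongr
    _ = ∑ d ∈ largeSmooth N Y, ρ d * (d : ℝ) ^ ((1 / 4 : ℝ) - 1) := by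
        rw [← mul_assoc, ← Real.rpow_add (by positivity)]
        norm_num
    _ ≤ _ := h.sum_smoothNumbers_le_exp le_rfl (coe_largeSmooth_subset_smoothNumbers N Y)

end IsPrimePowBounded

end Rankin

section DivisorSum

open Finset

/-- The sum of `τ(|g(k)|)` over the natural numbers `1 ≤ k ≤ N` with `g(k) ≠ 0`. -/
def divisorSum (g : ℤ[X]) (N : ℕ) : ℝ :=
  ∑ k ∈ Icc 1 N with g.eval ((k : ℕ) : ℤ) ≠ 0, (#(g.eval (k : ℤ)).natAbs.divisors : ℝ)

lemma divisorSum_mono (g : ℤ[X]) : Monotone (divisorSum g) := fun _ _ h ↦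
  sum_le_sum_of_subset_of_nonneg (filter_subset_filter _ (Icc_subset_Icc_right h))
    fun _ _ _ ↦ Nat.cast_nonneg _

lemma sum_filter_Icc_floor_eq_divisorSum (g : ℤ[X]) {x : ℝ} (hx : 0 ≤ x) :
    ∑ k ∈ Icc 1 ⌊x⌋ with g.eval k ≠ 0, (#(g.eval k).natAbs.divisors : ℝ) =
      divisorSum g ⌊x⌋₊ := by
  have hIcc : Icc 1 ⌊x⌋ = (Icc 1 ⌊x⌋₊).image ((↑) : ℕ → ℤ) := by
    rw [← coe_inj, coe_image, coe_Icc, coe_Icc, Nat.image_cast_int_Icc,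
      Int.natCast_floor_eq_floor hx, Nat.cast_one]
  rw [hIcc, filter_image, sum_image Nat.cast_injective.injOn, divisorSum]

lemma eventually_natAbs_eval_le_pow (g : ℤ[X]) :
    ∀ᶠ N : ℕ in atTop, ∀ k ∈ Icc 1 N, (g.eval (k : ℤ)).natAbs ≤ N ^ (g.natDegree + 1) := by
  filter_upwards [eventually_ge_atTop (∑ i ∈ range (g.natDegree + 1), (g.coeff i).natAbs)]
    with N hN k hk
  obtain ⟨hk₁, hkN⟩ := mem_Icc.1 hk
  calc (g.eval (k : ℤ)).natAbs
      ≤ ∑ i ∈ range (g.natDegree + 1), (g.coeff i * (k : ℤ) ^ i).natAbs := by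
        rw [eval_eq_sum_range]
        exact Int.natAbs_sum_le _ _
    _ ≤ ∑ i ∈ range (g.natDegree + 1), (g.coeff i).natAbs * N ^ g.natDegree := by
        refine sum_le_sum fun i hi ↦ ?_
        rw [Int.natAbs_mul, Int.natAbs_pow, Int.natAbs_natCast]
        exact Nat.mul_le_mul_left _ ((Nat.pow_le_pow_left hkN i).trans
          (Nat.pow_le_pow_right (hk₁.trans hkN) (Nat.lt_succ_iff.1 (mem_range.1 hi))))
    _ = (∑ i ∈ range (g.natDegree + 1), (g.coeff i).natAbs) * N ^ g.natDegree := by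
        rw [sum_mul]
    _ ≤ N * N ^ g.natDegree := by gcongr
    _ = N ^ (g.natDegree + 1) := (pow_succ' N _).symm

lemma sum_card_filter_dvd_natAbs_eval_le (g : ℤ[X]) {N : ℕ} {S D : Finset ℕ}
    (hS : S ⊆ Icc 1 N) (hD : D ⊆ Icc 1 N) :
    ∑ k ∈ S, (#{d ∈ D | d ∣ (g.eval (k : ℤ)).natAbs} : ℝ) ≤
      2 * N * ∑ d ∈ D, (rootCount g d : ℝ) / d := by
  have hswap : ∑ k ∈ S, #{d ∈ D | d ∣ (g.eval (k : ℤ)).natAbs} =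
      ∑ d ∈ D, #{k ∈ S | (d : ℤ) ∣ g.eval ((k : ℕ) : ℤ)} := by
    simp only [← Int.natCast_dvd]
    exact sum_card_bipartiteAbove_eq_sum_card_bipartiteBelow
      fun (k d : ℕ) ↦ (d : ℤ) ∣ g.eval (k : ℤ)
  rw [mul_sum]
  calc ∑ k ∈ S, (#{d ∈ D | d ∣ (g.eval (k : ℤ)).natAbs} : ℝ)
      = ∑ d ∈ D, (#{k ∈ S | (d : ℤ) ∣ g.eval ((k : ℕ) : ℤ)} : ℝ) := mod_cast hswap
    _ ≤ ∑ d ∈ D, (#{k ∈ Icc 1 N | (d : ℤ) ∣ g.eval ((k : ℕ) : ℤ)} : ℝ) := by gcongr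
    _ ≤ ∑ d ∈ D, 2 * N * ((rootCount g d : ℝ) / d) :=
        sum_le_sum fun d hd ↦ card_filter_dvd_eval_le_mul_div g (hD hd)

lemma exists_isPrimePowBounded_rootCount {g : ℤ[X]}
    (hg : (g.map (Int.castRingHom ℚ)).Separable) :
    ∃ B : ℝ, IsPrimePowBounded (fun d ↦ (rootCount g d : ℝ)) B := by
  obtain ⟨B, hB⟩ := exists_rootCount_prime_pow_le hg
  exact ⟨B, {
    nonneg := fun _ ↦ Nat.cast_nonneg _
    map_one := mod_cast rootCount_one g
    map_mul_of_coprime := fun h ↦ mod_cast rootCount_mul g h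
    map_prime_pow_le := fun e hp ↦ mod_cast hB _ e hp }⟩

lemma exists_card_divisors_le_add_sum_add {A : ℕ} (hA : A ≠ 0) :
    ∃ C > 0, ∀ m N Y : ℕ, N ≠ 0 → m ≠ 0 → m ≤ N ^ A → 1 < Y →
      (#m.divisors : ℝ) ≤ 4 ^ A * #{d ∈ Icc 1 N | d ∣ m} +
        ∑ s ∈ Icc 2 (Nat.log Y N),
          2 ^ (A * (s + 1) + 1) * (#{d ∈ largeSmooth N (Nat.nthRoot s N) | d ∣ m} : ℝ) +
        C * (N : ℝ) ^ (1 / 16 : ℝ) * #{d ∈ largeSmooth N Y | d ∣ m} := by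
  obtain ⟨C, hC, hdiv⟩ := exists_card_divisors_le (ε := 1 / (16 * A)) (by positivity)
  refine ⟨C, hC, fun m N Y hN hm hmN hY ↦ ?_⟩
  have hτ : (#m.divisors : ℝ) ≤ C * (N : ℝ) ^ (1 / 16 : ℝ) :=
    calc (#m.divisors : ℝ) ≤ C * (m : ℝ) ^ (1 / (16 * A) : ℝ) := hdiv m hm
      _ ≤ C * ((N : ℝ) ^ A) ^ (1 / (16 * A) : ℝ) := by
          gcongr
          exact_mod_cast hmN
      _ = C * (N : ℝ) ^ (1 / 16 : ℝ) := by
          rw [← Real.rpow_natCast, ← Real.rpow_mul (Nat.cast_nonneg N)]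
          congr 2
          field_simp
  have hsplit : (#m.divisors : ℝ) ≤ 4 ^ A * #{d ∈ Icc 1 N | d ∣ m} +
      ∑ s ∈ Icc 2 (Nat.log Y N),
        2 ^ (A * (s + 1) + 1) * (#{d ∈ largeSmooth N (Nat.nthRoot s N) | d ∣ m} : ℝ) +
      #m.divisors * #{d ∈ largeSmooth N Y | d ∣ m} :=
    mod_cast card_divisors_le_add_sum_add hN hm hmN hY
  exact hsplit.trans (by gcongr)

lemma exists_divisorSum_le (g : ℤ[X]) :
    ∃ A : ℕ, ∃ C > 0, ∀ᶠ N : ℕ in atTop, ∀ Y > 1,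
      divisorSum g N ≤ 2 * N * (4 ^ A * ∑ d ∈ Icc 1 N, (rootCount g d : ℝ) / d +
        ∑ s ∈ Icc 2 (Nat.log Y N), 2 ^ (A * (s + 1) + 1) *
          ∑ d ∈ largeSmooth N (Nat.nthRoot s N), (rootCount g d : ℝ) / d +
        C * (N : ℝ) ^ (1 / 16 : ℝ) * ∑ d ∈ largeSmooth N Y, (rootCount g d : ℝ) / d) := by
  obtain ⟨C, hC, hdiv⟩ := exists_card_divisors_le_add_sum_add (Nat.succ_ne_zero g.natDegree)
  set A := g.natDegree + 1
  refine ⟨A, C, hC, ?_⟩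
  filter_upwards [eventually_natAbs_eval_le_pow g, eventually_ne_atTop 0] with N heval hN Y hY
  set S := {k ∈ Icc 1 N | g.eval ((k : ℕ) : ℤ) ≠ 0}
  let n (D : Finset ℕ) (k : ℕ) : ℝ := #{d ∈ D | d ∣ (g.eval (k : ℤ)).natAbs}
  have hn : ∀ D ⊆ Icc 1 N, ∑ k ∈ S, n D k ≤ 2 * N * ∑ d ∈ D, (rootCount g d : ℝ) / d :=
    fun D hD ↦ sum_card_filter_dvd_natAbs_eval_le g (filter_subset _ _) hD
  calc divisorSum g N
      ≤ ∑ k ∈ S, (4 ^ A * n (Icc 1 N) k +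
          ∑ s ∈ Icc 2 (Nat.log Y N), 2 ^ (A * (s + 1) + 1) * n (largeSmooth N (s.nthRoot N)) k +
          C * (N : ℝ) ^ (1 / 16 : ℝ) * n (largeSmooth N Y) k) := by
        refine sum_le_sum fun k hk ↦ ?_
        obtain ⟨hkN, hk⟩ := mem_filter.1 hk
        exact hdiv _ N Y hN (Int.natAbs_ne_zero.2 hk) (heval k hkN) hY
    _ = 4 ^ A * ∑ k ∈ S, n (Icc 1 N) k +
          ∑ s ∈ Icc 2 (Nat.log Y N), 2 ^ (A * (s + 1) + 1) *
            ∑ k ∈ S, n (largeSmooth N (s.nthRoot N)) k +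
          C * (N : ℝ) ^ (1 / 16 : ℝ) * ∑ k ∈ S, n (largeSmooth N Y) k := by
        simp only [sum_add_distrib, mul_sum]
        rw [sum_comm]
    _ ≤ 4 ^ A * (2 * N * ∑ d ∈ Icc 1 N, (rootCount g d : ℝ) / d) +
          ∑ s ∈ Icc 2 (Nat.log Y N), 2 ^ (A * (s + 1) + 1) *
            (2 * N * ∑ d ∈ largeSmooth N (s.nthRoot N), (rootCount g d : ℝ) / d) +
          C * (N : ℝ) ^ (1 / 16 : ℝ) *
            (2 * N * ∑ d ∈ largeSmooth N Y, (rootCount g d : ℝ) / d) := by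
        gcongr
        · exact hn _ Subset.rfl
        · exact hn _ (largeSmooth_subset_Icc N _)
        · exact hn _ (largeSmooth_subset_Icc N Y)
    _ = _ := by
        simp only [mul_left_comm _ (2 * (N : ℝ)), ← mul_sum]
        ring

lemma sum_two_pow_mul_le {A : ℕ} {T : Finset ℕ} {f : ℕ → ℝ} {L : ℝ} (hL : 0 ≤ L)
    (hf : ∀ s ∈ T, f s ≤ Real.exp (-((A + 1) * s)) * L) :
    ∑ s ∈ T, 2 ^ (A * (s + 1) + 1) * f s ≤ 2 ^ (A + 1) * L * ∑' s : ℕ, Real.exp (-s) := by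
  have htwo : ∀ s : ℕ, (2 : ℝ) ^ (A * s) ≤ Real.exp (A * s) := fun s ↦ by
    rw [← mul_one ((A : ℝ) * s), ← Nat.cast_mul, Real.exp_nat_mul]
    gcongr
    linarith [Real.exp_one_gt_d9]
  have hterm : ∀ s ∈ T, 2 ^ (A * (s + 1) + 1) * f s ≤ 2 ^ (A + 1) * L * Real.exp (-s) :=
    fun s hs ↦
      calc 2 ^ (A * (s + 1) + 1) * f s
          = 2 ^ (A + 1) * (2 ^ (A * s) * f s) := by ring
        _ ≤ 2 ^ (A + 1) * (Real.exp (A * s) * (Real.exp (-((A + 1) * s)) * L)) := by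
            gcongr 2 ^ (A + 1) * ?_
            exact (mul_le_mul_of_nonneg_left (hf s hs) (by positivity)).trans
              (mul_le_mul_of_nonneg_right (htwo s) (by positivity))
        _ = 2 ^ (A + 1) * L * Real.exp (-s) := by
            rw [← mul_assoc (Real.exp _), ← Real.exp_add]
            ring_nf
  calc ∑ s ∈ T, 2 ^ (A * (s + 1) + 1) * f s
      ≤ ∑ s ∈ T, 2 ^ (A + 1) * L * Real.exp (-s) := sum_le_sum hterm
    _ = 2 ^ (A + 1) * L * ∑ s ∈ T, Real.exp (-s) := (mul_sum ..).symm
    _ ≤ 2 ^ (A + 1) * L * ∑' s : ℕ, Real.exp (-s) := by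
        gcongr
        exact Real.summable_exp_neg_nat.sum_le_tsum _ fun _ _ ↦ (Real.exp_pos _).le

lemma exists_divisorSum_le_mul_log {g : ℤ[X]}
    (hg : Irreducible (g.map (Int.castRingHom ℚ))) :
    ∃ C : ℝ, ∀ᶠ N : ℕ in atTop, divisorSum g N ≤ C * (N * Real.log N) := by
  obtain ⟨B, hB⟩ := exists_isPrimePowBounded_rootCount hg.separable
  obtain ⟨C, hC⟩ := exists_sum_rootCount_div_le hg
  obtain ⟨A, C', hC', hsplit⟩ := exists_divisorSum_le g
  obtain ⟨K₁, hall⟩ := hB.exists_sum_Icc_div_le hC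
  obtain ⟨K₂, hK₂, hroot⟩ := hB.exists_sum_largeSmooth_nthRoot_div_le hC
    (a := A + 1) (by positivity)
  obtain ⟨Y, hY, hY₁⟩ := (hroot.and (eventually_gt_atTop 1)).exists
  obtain ⟨K₃, hK₃, hsmooth⟩ := hB.exists_rpow_mul_sum_largeSmooth_div_le Y
  set W := ∑' s : ℕ, Real.exp (-s)
  refine ⟨2 * (4 ^ A * K₁ + 2 ^ (A + 1) * K₂ * W + C' * K₃), ?_⟩
  filter_upwards [hsplit, hall, eventually_ne_atTop 0,
    tendsto_log_natCast_atTop.eventually_ge_atTop 1] with N hN hN₁ hN₀ hlog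
  have hmid : ∑ s ∈ Icc 2 (Nat.log Y N), 2 ^ (A * (s + 1) + 1) *
      ∑ d ∈ largeSmooth N (s.nthRoot N), (rootCount g d : ℝ) / d ≤
        2 ^ (A + 1) * (K₂ * Real.log N) * W :=
    sum_two_pow_mul_le (by positivity) fun s hs ↦ by
      obtain ⟨hs₂, hsY⟩ := mem_Icc.1 hs
      exact hY N s (by omega) (Nat.pow_le_of_le_log hN₀ hsY)
  have hlast : (N : ℝ) ^ (1 / 16 : ℝ) * ∑ d ∈ largeSmooth N Y, (rootCount g d : ℝ) / d ≤
      K₃ * Real.log N :=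
    (hsmooth N hN₀).trans (le_mul_of_one_le_right hK₃.le hlog)
  calc divisorSum g N ≤ _ := hN Y hY₁
    _ ≤ 2 * N * (4 ^ A * (K₁ * Real.log N) + 2 ^ (A + 1) * (K₂ * Real.log N) * W +
          C' * (K₃ * Real.log N)) := by
        rw [mul_assoc C']
        gcongr
    _ = 2 * (4 ^ A * K₁ + 2 ^ (A + 1) * K₂ * W + C' * K₃) * (N * Real.log N) := by ring

end DivisorSum

lemma exists_le_mul_mul_log_of_eventually_le {f : ℕ → ℝ} (hf : Monotone f)
    (h : ∃ C : ℝ, ∀ᶠ N : ℕ in atTop, f N ≤ C * (N * Real.log N)) :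
    ∃ C : ℝ, ∀ x : ℝ, 2 ≤ x → f ⌊x⌋₊ ≤ C * x * Real.log x := by
  obtain ⟨C, hC⟩ := h
  obtain ⟨N₀, hN₀⟩ := eventually_atTop.1 hC
  have : 0 < Real.log 2 := Real.log_pos one_lt_two
  refine ⟨|C| + |f N₀| / (2 * Real.log 2), fun x hx ↦ ?_⟩
  have hfloor : (⌊x⌋₊ : ℝ) ≤ x := Nat.floor_le (by linarith)
  have hfloor₂ : 2 ≤ ⌊x⌋₊ := Nat.le_floor (mod_cast hx)
  have hlog : 0 ≤ Real.log x := Real.log_nonneg (by linarith)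
  have htwo : 2 * Real.log 2 ≤ x * Real.log x := by gcongr
  rw [mul_assoc, add_mul]
  rcases le_total N₀ ⌊x⌋₊ with hge | hle
  · calc f ⌊x⌋₊ ≤ C * (⌊x⌋₊ * Real.log ⌊x⌋₊) := hN₀ _ hge
      _ ≤ |C| * (x * Real.log x) := by
          gcongr
          · exact le_abs_self C
      _ ≤ _ := le_add_of_nonneg_right (by positivity)
  · calc f ⌊x⌋₊ ≤ |f N₀| := (hf hle).trans (le_abs_self _)
      _ = |f N₀| / (2 * Real.log 2) * (2 * Real.log 2) := by field_simp
      _ ≤ |f N₀| / (2 * Real.log 2) * (x * Real.log x) := by gcongr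
      _ ≤ _ := le_add_of_nonneg_left (by positivity)

end PolynomialDivisorSum

open PolynomialDivisorSum in
theorem stmt9_general (g : Polynomial ℤ) (hg : Irreducible (g.map (Int.castRingHom ℚ))) :
    ∃ Cg : ℝ, ∀ x : ℝ, 2 ≤ x →
      (∑ k ∈ (Finset.Icc (1 : ℤ) ⌊x⌋).filter (fun k => g.eval k ≠ 0),
          (((g.eval k).natAbs.divisors.card : ℝ)))
        ≤ Cg * x * Real.log x := by
  obtain ⟨C, hC⟩ := exists_le_mul_mul_log_of_eventually_le (divisorSum_mono g)
    (exists_divisorSum_le_mul_log hg)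
  refine ⟨C, fun x hx ↦ ?_⟩
  rw [sum_filter_Icc_floor_eq_divisorSum g (by linarith)]
  exact hC x hx

/-- **Erdős' theorem on divisors of polynomial values.**  For any irreducible
polynomial `g ∈ ℤ[x]` of degree at least `1` there is a constant `C_g` such that for
all `x ≥ 2` one has `∑_{1 ≤ k ≤ x, g(k) ≠ 0} τ(|g(k)|) ≤ C_g · x · log x`, where
`τ(n)` is the number of positive divisors of `n`. -/
theorem stmt9 (g : Polynomial ℤ) (hirr : Irreducible g) (hdeg : 1 ≤ g.natDegree) :
    ∃ Cg : ℝ, ∀ x : ℝ, 2 ≤ x →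
      (∑ k ∈ (Finset.Icc (1 : ℤ) ⌊x⌋).filter (fun k => g.eval k ≠ 0),
          (((g.eval k).natAbs.divisors.card : ℝ)))
        ≤ Cg * x * Real.log x :=
  stmt9_general g ((Polynomial.IsPrimitive.Int.irreducible_iff_irreducible_map_cast
    (hirr.isPrimitive (by omega))).1 hirr)

end
end
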